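/- Assume q ≡ 1 (mod 4). Then Ker(φ) is the internal direct sum of (q-1)/4 F[H]-submodules M_1, …, M_{(q-1)/4} which are pairwise non-isomorphic simple F[H]-modules, each of F-dimension q-1. -/

import Mathlib

/-!
The proof works with the quadratic extension `L = K(√d)`. Let `n = (q-1)/4`. As `q ≡ 1 (mod 4)`, the
number `2n + 1 = (q+1)/2` is odd, so `Lˣ` has an `F`-valued character `θ` of order `2n + 1`; it is trivial
on `Kˣ`, and its powers `θ ^ j` with `1 ≤ j ≤ n` represent the nontrivial powers up to inversion.

**The kernel of `φ`.** Let `A` be the matrix of the conjugacy relation on internal points, that is, the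
matrix of `φ`. Counting points conjugate to two given points shows `A² = 1 + P` over `F`, where `P` is
the indicator matrix of pairs joined by a passant (`inc_sq`). For a character `χ` of `Lˣ` trivial on `Kˣ`
let `Pm χ` be the matrix whose entry at a pair joined by a passant is `χ y + χ ȳ`, where `y` and `ȳ` are the
roots of `X² - b X + Q Q'`, with `b` the bilinear form of the two points and `Q, Q'` the values of the
quadratic form. Summing a geometric series gives `P = ∑ⱼ Pm (θ ^ j)` (`pas_eq_sum`), and pairing off
points under a reflection gives `A (Pm χ) = 0` (`inc_Pm`). Hence `P` is idempotent with image `Ker φ`.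

**Bases.** Fix a primitive additive character `ψ` of `K`. A Fourier transform on `K` factors `Pm χ` as
`∑_{α ≠ 0} xv α ⊗ xv (-α)` (`Pm_eq_sum`, from the character-sum identity `sum_Kf_mul_Kf`), where `xv α` is
an eigenvector of the unipotent subgroup `U` of weight `b ↦ ψ (α b)`. The vectors `xv` for all `j` and `α`
are linearly independent (`xv_linearIndependent`, by Fourier inversion and independence of characters).
Therefore the `Pm (θ ^ j)` are orthogonal idempotents of rank `q - 1` commuting with `H`, and `Ker φ` is the
direct sum of their images `Mj (θ ^ j)`.

**Simplicity and non-isomorphism.** The weights of `U` on `Mj` are the `ψ (α ·)` with `α ≠ 0`, each of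
multiplicity one, so a submodule of `Mj`, or an isomorphism between two of these modules, is given by a
function `c` on `Kˣ`. The torus makes `c` constant on square classes, and `E = ∑ c α • xv α ⊗ xv (-α)` is
an `H`-invariant matrix. Such an `E` vanishes at pairs joined by a secant (`Ek_secant`), and any other
pair of internal points is interchanged by a reflection of nonsquare determinant. So the transpose of
`E` equals `E` with `c` twisted by a nonsquare (`Ek_swap`). Comparing coefficients, `c` is constant on `Kˣ`
when the two characters agree, which gives simplicity, and zero when they differ, which excludes
isomorphisms.
-/

open scoped Classical

noncomputable section

namespace ConicPaper

variable (K : Type) [Field K] [Fintype K]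

/-- Points (and also lines, via homogeneous coordinates) of `PG(2,q)`. -/
abbrev Pt := Projectivization K (Fin 3 → K)

instance : Fintype (Pt K) := @Fintype.ofFinite _ (Quotient.finite _)

/-- `a` is a nonsquare in `K`. -/
def Nonsq (a : K) : Prop := ¬ IsSquare a

/-- The quadratic form `Q(x0,x1,x2) = x1^2 - x0*x2` defining the conic. -/
def Qf (v : Fin 3 → K) : K := v 1 ^ 2 - v 0 * v 2

/-- A point is internal when `Q` of (a representative of) it is a nonsquare. -/
def Internal (p : Pt K) : Prop := Nonsq K (Qf K p.rep)

/-- A point is external when `Q` of it is a nonzero square. -/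
def External (p : Pt K) : Prop := Qf K p.rep ≠ 0 ∧ IsSquare (Qf K p.rep)

/-- The point `p` lies on the line `ℓ = [b0,b1,b2]`. -/
def OnL (p ℓ : Pt K) : Prop :=
  p.rep 0 * ℓ.rep 0 + p.rep 1 * ℓ.rep 1 + p.rep 2 * ℓ.rep 2 = 0

/-- Discriminant `b1^2 - 4 b0 b2` of a line. -/
def lineDisc (ℓ : Pt K) : K := ℓ.rep 1 ^ 2 - 4 * ℓ.rep 0 * ℓ.rep 2

/-- A line is a passant when its discriminant is a nonsquare. -/
def Passant (ℓ : Pt K) : Prop := Nonsq K (lineDisc K ℓ)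

/-- A line is a secant when its discriminant is a nonzero square. -/
def Secant (ℓ : Pt K) : Prop := lineDisc K ℓ ≠ 0 ∧ IsSquare (lineDisc K ℓ)

/-- The incidence pairing of the vector `w` with the polar line
`p^⊥ = [z, -2y, x]` of the point `p = (x,y,z)`. -/
def perpDot (p : Pt K) (w : Fin 3 → K) : K :=
  w 0 * p.rep 2 + w 1 * (-2 * p.rep 1) + w 2 * p.rep 0

/-- The point `r` lies on the passant line `p^⊥`. -/
def OnPerp (p r : Pt K) : Prop := perpDot K p r.rep = 0

/-- The (finite) set `I` of internal points, as a type. -/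
abbrev Ipts := {p : Pt K // Internal K p}

instance : Fintype (Ipts K) := Fintype.ofFinite _

/-- The action of a (nonsingular) matrix `M` on points of `PG(2,q)`:
`p ↦ p·M`.  (If `p.rep ᵥ* M` were zero -- impossible for invertible `M` --
we return `p`, making the function total.) -/
def actPt (M : Matrix (Fin 3) (Fin 3) K) (p : Pt K) : Pt K :=
  if h : Matrix.vecMul p.rep M ≠ 0 then Projectivization.mk K (Matrix.vecMul p.rep M) h else p

/-- The group `H ≅ PSL(2,q)`, given by its set of matrix representatives. -/
def Hset : Set (Matrix (Fin 3) (Fin 3) K) :=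
  {M | ∃ a b c d : K, a * d - b * c = 1 ∧
    M = !![a^2, a*b, b^2; 2*a*c, a*d + b*c, 2*b*d; c^2, c*d, d^2]}

/-- An algebraic closure `F` of `F_2`. -/
abbrev F2bar := AlgebraicClosure (ZMod 2)

/-- The incidence matrix `A`, regarded over `F`. -/
def AmatF : Matrix (Ipts K) (Ipts K) F2bar :=
  Matrix.of fun p r => if OnPerp K p.1 r.1 then 1 else 0

/-- The map `φ : F^I → F^I`, `e_p ↦ ∑_{r ∈ I, r on p^⊥} e_r`; its matrix
with respect to the standard basis is `A`. -/
def phi : (Ipts K → F2bar) →ₗ[F2bar] (Ipts K → F2bar) :=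
  Matrix.vecMulLinear (AmatF K)

/-- The permutation matrix (over `F`) of the action of `M ∈ H` on `I`. -/
def actMat (M : Matrix (Fin 3) (Fin 3) K) : Matrix (Ipts K) (Ipts K) F2bar :=
  Matrix.of fun p r => if actPt K M p.1 = r.1 then 1 else 0

/-- The action of `M ∈ H` on `F^I`, extending `e_p ↦ e_{p^M}` linearly. -/
def actF (M : Matrix (Fin 3) (Fin 3) K) :
    (Ipts K → F2bar) →ₗ[F2bar] (Ipts K → F2bar) :=
  Matrix.vecMulLinear (actMat K M)

/-- `W` is an `F[H]`-submodule of `F^I` (an `H`-stable subspace). -/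
def HStable (W : Submodule F2bar (Ipts K → F2bar)) : Prop :=
  ∀ M ∈ Hset K, ∀ x ∈ W, actF K M x ∈ W

/-- `W` is a simple `F[H]`-module: it is nonzero and has no `H`-stable
subspace other than `⊥` and itself. -/
def HSimple (W : Submodule F2bar (Ipts K → F2bar)) : Prop :=
  W ≠ ⊥ ∧ ∀ W' : Submodule F2bar (Ipts K → F2bar), W' ≤ W → HStable K W' → W' = ⊥ ∨ W' = W

/-- `W` and `W'` are isomorphic as `F[H]`-modules: there is an `F`-linear
equivalence commuting with the `H`-action. -/
def HIso (W W' : Submodule F2bar (Ipts K → F2bar)) : Prop :=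
  ∃ e : W ≃ₗ[F2bar] W', ∀ M ∈ Hset K, ∀ x : W,
    ∀ h : actF K M (x : Ipts K → F2bar) ∈ W,
      ((e ⟨actF K M (x : Ipts K → F2bar), h⟩ : W') : Ipts K → F2bar) =
        actF K M ((e x : W') : Ipts K → F2bar)

set_option linter.unusedSectionVars false

/-! ### The quadratic extension and the characters `θ` -/

section Characters

variable {K}

/-- The quadratic extension `K(√d)` of `K`. -/
abbrev QL (d : K) := QuadraticAlgebra K d 0

instance (d : K) : Fintype (QL d) :=
  @Fintype.ofFinite _ (Module.finite_of_finite K)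

theorem QL.norm_eq {d : K} (z : QL d) : QuadraticAlgebra.norm z = z.re ^ 2 - d * z.im ^ 2 := by
  rw [QuadraticAlgebra.norm_def]; ring

theorem QL.ext' {d : K} {z w : QL d} (h1 : z.re = w.re) (h2 : z.im = w.im) : z = w :=
  QuadraticAlgebra.ext h1 h2

variable {d : K} [hd : Fact (∀ r : K, r ^ 2 ≠ d + 0 * r)]

theorem QL.not_sq : ¬ IsSquare d := by
  rintro ⟨r, hr⟩
  exact hd.out r (by rw [hr]; ring)

/-- An element of `K(√d)` fixed by the `q`-power map lies in `K`. -/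
theorem QL.im_eq_zero_of_pow_card (h2 : ringChar K ≠ 2) (w : QL d)
    (hw : w ^ Fintype.card K = w) : w.im = 0 := by
  by_contra him
  have hd0 : d ≠ 0 := by rintro rfl; exact QL.not_sq (d := (0 : K)) (IsSquare.zero)
  set om : QL d := ⟨0, 1⟩ with hom
  have hom2 : om ^ 2 = algebraMap K (QL d) d := by
    rw [sq]; apply QL.ext' <;> simp [hom]
  have hw' : w = algebraMap K (QL d) w.re + algebraMap K (QL d) w.im * om := by
    apply QL.ext' <;> simp [hom]
  have hf : FiniteField.frobeniusAlgHom K (QL d) w = w := by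
    rw [FiniteField.coe_frobeniusAlgHom]; exact hw
  have hf2 : FiniteField.frobeniusAlgHom K (QL d) om = om := by
    rw [hw', map_add, map_mul, AlgHom.commutes, AlgHom.commutes] at hf
    have h3 := add_left_cancel hf
    refine mul_left_cancel₀ ?_ h3
    rw [Ne, FaithfulSMul.algebraMap_eq_zero_iff]; exact him
  rw [FiniteField.coe_frobeniusAlgHom] at hf2
  have hom0 : om ≠ 0 := by
    intro h; have := congrArg QuadraticAlgebra.im h; simp [hom] at this
  have hodd : Fintype.card K = 2 * (Fintype.card K / 2) + 1 := by
    have := FiniteField.odd_card_of_char_ne_two h2; omega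
  have h4 : om ^ (2 * (Fintype.card K / 2)) = 1 := by
    have h5 : om ^ Fintype.card K = om := hf2
    rw [hodd, pow_succ] at h5
    have := mul_right_cancel₀ hom0 (h5.trans (one_mul om).symm)
    exact this
  rw [pow_mul, hom2, ← map_pow] at h4
  have h5 : d ^ (Fintype.card K / 2) = 1 := by
    apply (algebraMap K (QL d)).injective
    rw [h4, map_one]
  exact QL.not_sq ((FiniteField.isSquare_iff h2 hd0).2 h5)

theorem QL.card : Fintype.card (QL d) = Fintype.card K ^ 2 := by
  rw [Module.card_eq_pow_finrank (K := K), QuadraticAlgebra.finrank_eq_two]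

variable {F : Type} [Field F] [CharP F 2]

/-- A character of `K(√d)ˣ` that is trivial on `Kˣ` and nontrivial. -/
structure GoodChar (χ : MulChar (QL d) F) : Prop where
  triv : ∀ c : K, c ≠ 0 → χ (algebraMap K (QL d) c) = 1
  ne_one : χ ≠ 1

/-- There is a character `θ` of order `(q+1)/2` of `K(√d)ˣ`, trivial on `Kˣ`, which takes the
value `1` only at elements with square in `K`. -/
theorem exists_theta [IsAlgClosed F] (h1 : Fintype.card K % 4 = 1) :
    ∃ θ : MulChar (QL d) F, orderOf θ = 2 * ((Fintype.card K - 1) / 4) + 1 ∧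
      (∀ c : K, c ≠ 0 → θ (algebraMap K (QL d) c) = 1) ∧
      (∀ z : QL d, θ z = 1 → z.re * z.im = 0) := by
  have h2 : ringChar K ≠ 2 := by
    intro h
    have := FiniteField.even_card_of_char_two h
    omega
  set n := (Fintype.card K - 1) / 4 with hn
  have hq : Fintype.card K = 4 * n + 1 := by omega
  have hNe : NeZero ((2 * n + 1 : ℕ) : F) := by
    constructor
    rw [Nat.cast_add, Nat.cast_mul, show ((2 : ℕ) : F) = 0 from CharP.cast_eq_zero F 2]
    simp
  obtain ⟨ζ, hζ⟩ := HasEnoughRootsOfUnity.exists_primitiveRoot F (2 * n + 1)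
  have hcard : Fintype.card (QL d) - 1 = (2 * n + 1) * (2 * (4 * n)) := by
    rw [QL.card, hq]
    have : (4 * n + 1) ^ 2 = (2 * n + 1) * (2 * (4 * n)) + 1 := by ring
    omega
  obtain ⟨θ, hθ⟩ := MulChar.exists_mulChar_orderOf (QL d) (n := 2 * n + 1)
    (by rw [hcard]; exact dvd_mul_right _ _) hζ
  have hpow : ∀ z : QL d, z ≠ 0 → (θ z) ^ (2 * n + 1) = 1 := by
    intro z hz
    have : (θ ^ (2 * n + 1)) z = 1 := by
      rw [← hθ, pow_orderOf_eq_one]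
      exact MulChar.one_apply (IsUnit.mk0 z hz)
    rwa [MulChar.pow_apply' _ (by omega)] at this
  refine ⟨θ, hθ, ?_, ?_⟩
  · intro c hc
    have h3 : (θ (algebraMap K (QL d) c)) ^ (4 * n) = 1 := by
      rw [← map_pow, ← map_pow]
      have : c ^ (4 * n) = 1 := by
        have := FiniteField.pow_card_sub_one_eq_one c hc
        rwa [hq, Nat.add_sub_cancel] at this
      rw [this, map_one, map_one]
    have h4 := hpow (algebraMap K (QL d) c)
      (by rw [Ne, FaithfulSMul.algebraMap_eq_zero_iff]; exact hc)
    have hc2 : Nat.Coprime (4 * n) (2 * n + 1) := by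
      have e1 : Nat.Coprime 4 (2 * n + 1) := by
        have : Nat.Coprime (2 ^ 2) (2 * n + 1) := by
          apply Nat.Coprime.pow_left
          rw [Nat.coprime_two_left]; exact odd_two_mul_add_one n
        simpa using this
      have e2 : Nat.Coprime n (2 * n + 1) := by
        simp
      exact e1.mul_left e2
    have := pow_gcd_eq_one.2 ⟨h3, h4⟩
    rwa [hc2.gcd_eq_one, pow_one] at this
  · intro z hz
    have hz0 : z ≠ 0 := by rintro rfl; rw [MulChar.map_zero] at hz; exact zero_ne_one hz
    obtain ⟨g, hg⟩ := IsCyclic.exists_generator (α := (QL d)ˣ)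
    obtain ⟨k, hk⟩ := (mem_powers_iff_mem_zpowers.2 (hg (Units.mk0 z hz0)))
    have hk' : (g : QL d) ^ k = z := by
      have := congrArg (Units.val) hk
      simpa using this
    have hordg : orderOf (θ (g : QL d)) = 2 * n + 1 := by
      apply Nat.dvd_antisymm
      · exact orderOf_dvd_of_pow_eq_one (hpow _ g.ne_zero)
      · rw [← hθ]
        apply orderOf_dvd_of_pow_eq_one
        rw [MulChar.ext_iff]
        intro a
        obtain ⟨l, hl⟩ := (mem_powers_iff_mem_zpowers.2 (hg a))
        rw [MulChar.pow_apply_coe, MulChar.one_apply_coe, ← hl]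
        simp only [Units.val_pow_eq_pow_val, map_pow]
        rw [← pow_mul, mul_comm l, pow_mul, pow_orderOf_eq_one, one_pow]
    have hdvd : 2 * n + 1 ∣ k := by
      rw [← hordg]; apply orderOf_dvd_of_pow_eq_one
      rw [← map_pow, hk', hz]
    obtain ⟨t, ht⟩ := hdvd
    have hz1 : z ^ (2 * (4 * n)) = 1 := by
      rw [← hk', ht, ← pow_mul, mul_right_comm, ← hcard, pow_mul,
        FiniteField.pow_card_sub_one_eq_one _ g.ne_zero, one_pow]
    have h5 : (z ^ 2) ^ Fintype.card K = z ^ 2 := by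
      rw [hq, pow_succ, ← pow_mul, hz1, one_mul]
    have h6 := QL.im_eq_zero_of_pow_card h2 _ h5
    rw [sq, QuadraticAlgebra.im_mul] at h6
    have h7 : (2 : K) * (z.re * z.im) = 0 := by linear_combination h6
    exact (mul_eq_zero.1 h7).resolve_left (Ring.two_ne_zero h2)

end Characters

/-! ### Character sums over norm fibres -/

section Sums

variable {K}
variable {d : K} [hd : Fact (∀ r : K, r ^ 2 ≠ d + 0 * r)]
variable {F : Type} [Field F] [CharP F 2]

theorem two_ne_zero_of_card (h1 : Fintype.card K % 4 = 1) : (2 : K) ≠ 0 := by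
  apply Ring.two_ne_zero
  intro h
  have := FiniteField.even_card_of_char_two h
  omega

theorem card_eq_one (h1 : Fintype.card K % 4 = 1) : ((Fintype.card K : ℕ) : F) = 1 := by
  have : Fintype.card K = 2 * (Fintype.card K / 2) + 1 := by omega
  rw [this, Nat.cast_add, Nat.cast_mul, show ((2 : ℕ) : F) = 0 from CharP.cast_eq_zero F 2]
  simp

theorem QL.norm_ne_zero {z : QL d} (hz : z ≠ 0) : QuadraticAlgebra.norm z ≠ 0 :=
  fun h => hz (QuadraticAlgebra.norm_eq_zero_iff_eq_zero.1 h)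

theorem QL.algebraMap_ne_zero {c : K} (hc : c ≠ 0) : algebraMap K (QL d) c ≠ 0 := by
  rw [Ne, FaithfulSMul.algebraMap_eq_zero_iff]; exact hc

theorem QL.star_ne_zero {z : QL d} (hz : z ≠ 0) : star z ≠ 0 := by
  intro h; apply hz; rw [← star_star z, h, star_zero]

variable {χ : MulChar (QL d) F}

theorem GoodChar.mul_map_star (hχ : GoodChar χ) {z : QL d} (hz : z ≠ 0) : χ z * χ (star z) = 1 := by
  rw [← map_mul, ← QuadraticAlgebra.algebraMap_norm_eq_mul_star]
  exact hχ.triv _ (QL.norm_ne_zero hz)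

theorem GoodChar.map_star (hχ : GoodChar χ) {z : QL d} (hz : z ≠ 0) : χ (star z) = (χ z)⁻¹ :=
  eq_inv_of_mul_eq_one_right (hχ.mul_map_star hz)

theorem GoodChar.smul (hχ : GoodChar χ) {c : K} (hc : c ≠ 0) (z : QL d) :
    χ (algebraMap K (QL d) c * z) = χ z := by
  rw [map_mul, hχ.triv c hc, one_mul]

theorem sq_eq_one_char_two {x : F} (h : x ^ 2 = 1) : x = 1 := by
  have h2 : (2 : F) = 0 := CharP.cast_eq_zero F 2
  have : (x - 1) ^ 2 = 0 := by linear_combination h - (x - 1) * h2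
  exact sub_eq_zero.1 (pow_eq_zero_iff (two_ne_zero)|>.1 this)

/-- The character is already nontrivial on the elements of norm one. -/
theorem GoodChar.exists_norm_one (hχ : GoodChar χ) :
    ∃ u : QL d, QuadraticAlgebra.norm u = 1 ∧ χ u ≠ 1 := by
  obtain ⟨a, ha⟩ := MulChar.ne_one_iff.1 hχ.ne_one
  have ha0 : (a : QL d) ≠ 0 := a.ne_zero
  refine ⟨a * (star (a : QL d))⁻¹, ?_, ?_⟩
  · rw [map_mul]
    have h3 : QuadraticAlgebra.norm (star (a : QL d)) *
        QuadraticAlgebra.norm ((star (a : QL d))⁻¹) = 1 := by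
      rw [← map_mul, mul_inv_cancel₀ (QL.star_ne_zero ha0), map_one]
    rwa [QuadraticAlgebra.norm_star] at h3
  · intro h
    apply ha
    apply sq_eq_one_char_two
    have h4 : χ ((star (a : QL d))⁻¹) * χ (star (a : QL d)) = 1 := by
      rw [← map_mul, inv_mul_cancel₀ (QL.star_ne_zero ha0), map_one]
    have h5 := hχ.mul_map_star ha0
    rw [map_mul] at h
    linear_combination h5 * χ a * χ (star (a : QL d))⁻¹ + h - (χ a)^2 * h4

/-- The sum of `χ` over the nonrational elements of `K(√d)` with norm `n` and trace `b`. -/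
def kf (χ : MulChar (QL d) F) (b n : K) : F :=
  ∑ y : QL d, if y.im ≠ 0 ∧ QuadraticAlgebra.norm y = n ∧ 2 * y.re = b then χ y else 0

/-- The twisted Kloosterman-type sum of `χ` over the elements of norm `m`. -/
def Kf (χ : MulChar (QL d) F) (ψ : AddChar K F) (α m : K) : F :=
  ∑ z : QL d, if QuadraticAlgebra.norm z = m then χ z * ψ (α * z.re) else 0

theorem kf_scale (hχ : GoodChar χ) {l : K} (hl : l ≠ 0) (b n : K) :
    kf χ (l * b) (l ^ 2 * n) = kf χ b n := by
  unfold kf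
  symm
  refine Fintype.sum_equiv (Equiv.mulLeft₀ _ (QL.algebraMap_ne_zero (d := d) hl)) _ _ ?_
  intro y
  simp only [Equiv.mulLeft₀_apply]
  rw [hχ.smul hl, map_mul, QuadraticAlgebra.norm_algebraMap]
  have e1 : (algebraMap K (QL d) l * y).im = l * y.im := by simp
  have e2 : (algebraMap K (QL d) l * y).re = l * y.re := by simp
  rw [e1, e2]
  congr 1
  rw [mul_ne_zero_iff_left hl, mul_right_inj' (pow_ne_zero 2 hl), mul_left_comm, mul_right_inj' hl]

theorem kf_eq_zero_of_isSquare {b n : K} (h2 : (2 : K) ≠ 0) (h : IsSquare (b ^ 2 - 4 * n)) :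
    kf χ b n = 0 := by
  unfold kf
  apply Finset.sum_eq_zero
  intro y _
  rw [if_neg]
  rintro ⟨hi, hn, hb⟩
  obtain ⟨r, hr⟩ := h
  apply QL.not_sq (d := d)
  refine ⟨r / (2 * y.im), ?_⟩
  rw [QL.norm_eq] at hn
  field_simp
  linear_combination hr - 4 * hn + hb * (2 * y.re + b)

theorem Kf_neg (hχ : GoodChar χ) (ψ : AddChar K F) (α m : K) : Kf χ ψ (-α) m = Kf χ ψ α m := by
  unfold Kf
  refine Fintype.sum_equiv (Equiv.neg _) _ _ ?_
  intro y
  have : χ (-y) = χ y := by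
    have := hχ.smul (c := -1) (by simp) y
    simpa using this
  simp [this]

theorem Kf_zero (hχ : GoodChar χ) (ψ : AddChar K F) (m : K) : Kf χ ψ 0 m = 0 := by
  obtain ⟨u, hu, hu1⟩ := hχ.exists_norm_one
  have hu0 : u ≠ 0 := by rintro rfl; simp at hu
  have key : χ u * Kf χ ψ 0 m = Kf χ ψ 0 m := by
    unfold Kf
    rw [Finset.mul_sum]
    refine Fintype.sum_equiv (Equiv.mulLeft₀ u hu0) _ _ ?_
    intro y
    simp [hu]
  have : (χ u - 1) * Kf χ ψ 0 m = 0 := by linear_combination key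
  exact (mul_eq_zero.1 this).resolve_left (sub_ne_zero.2 hu1)

/-- Multiplying `z` by `c ∈ Kˣ` does not change `χ z`; hence `Kf` at a nonsquare `m` is determined by
its values at one nonsquare. -/
theorem Kf_scale (hχ : GoodChar χ) (ψ : AddChar K F) {c : K} (hc : c ≠ 0) (α m : K) :
    Kf χ ψ α (c ^ 2 * m) = Kf χ ψ (c * α) m := by
  unfold Kf
  symm
  refine Fintype.sum_equiv (Equiv.mulLeft₀ _ (QL.algebraMap_ne_zero (d := d) hc)) _ _ ?_
  intro y
  simp only [Equiv.mulLeft₀_apply]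
  rw [hχ.smul hc, map_mul QuadraticAlgebra.norm, QuadraticAlgebra.norm_algebraMap]
  have e2 : (algebraMap K (QL d) c * y).re = c * y.re := by simp
  rw [e2, show c * α * y.re = α * (c * y.re) by ring]
  congr 1
  rw [mul_right_inj' (pow_ne_zero 2 hc)]

theorem fourier (h1 : Fintype.card K % 4 = 1) {ψ : AddChar K F} (hψ : ψ.IsPrimitive) (b : K) :
    ∑ x : K, ψ (x * b) = if b = 0 then 1 else 0 := by
  rw [AddChar.sum_mulShift b hψ]
  split_ifs
  · exact card_eq_one h1
  · simp

end Sums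

/-! ### Fourier factorization of the sums `kf` -/

section Sums2

variable {K}
variable {d : K} [hd : Fact (∀ r : K, r ^ 2 ≠ d + 0 * r)]
variable {F : Type} [Field F] [CharP F 2] {χ : MulChar (QL d) F}

theorem add_self_char_two (x : F) : x + x = 0 := CharTwo.add_self_eq_zero x

/-- In characteristic two, conjugate elements cancel in a conjugation-invariant sum. -/
theorem sum_star_invariant (h2 : (2 : K) ≠ 0) (f : QL d → F) (hf : ∀ z, f (star z) = f z) :
    ∑ z, f z = ∑ a : K, f ⟨a, 0⟩ := by
  rw [← Finset.sum_filter_add_sum_filter_not Finset.univ (fun z : QL d => z.im = 0)]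
  have e1 : ∑ z ∈ Finset.univ.filter (fun z : QL d => ¬ z.im = 0), f z = 0 := by
    refine Finset.sum_involution (fun z _ => star z) ?_ ?_ ?_ ?_
    · intro z _; rw [hf]; exact add_self_char_two _
    · intro z hz _ h
      have h3 := congrArg QuadraticAlgebra.im h
      have h4 : -z.im = z.im := by simpa using h3
      have hz' := (Finset.mem_filter.1 hz).2
      apply hz'
      have : (2 : K) * z.im = 0 := by linear_combination -h4
      exact (mul_eq_zero.1 this).resolve_left h2
    · intro z hz
      simpa using hz
    · intro z _; exact star_star z
  rw [e1, add_zero]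
  symm
  refine Finset.sum_bij (fun a _ => (⟨a, 0⟩ : QL d)) ?_ ?_ ?_ ?_
  · intro a _; simp
  · intro a _ b _ h; exact congrArg QuadraticAlgebra.re h
  · intro z hz
    refine ⟨z.re, Finset.mem_univ _, ?_⟩
    apply QL.ext'
    · rfl
    · exact (Finset.mem_filter.1 hz).2.symm
  · intro a _; rfl

theorem count_norm_re (h2 : (2 : K) ≠ 0) (c s : K) :
    ∑ z : QL d, (if QuadraticAlgebra.norm z = c ∧ z.re = s then (1 : F) else 0) =
      if s ^ 2 = c then 1 else 0 := by
  rw [sum_star_invariant h2]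
  · rw [Finset.sum_eq_single s]
    · simp [QL.norm_eq]
    · intro b _ hb; rw [if_neg]; rintro ⟨_, h⟩; exact hb h
    · simp
  · intro z; simp

/-- The number of elements of a given nonsquare norm is even, because conjugation has no fixed points
among them. -/
theorem count_norm (h2 : (2 : K) ≠ 0) {m : K} (hm : ¬ IsSquare m) :
    ∑ z : QL d, (if QuadraticAlgebra.norm z = m then (1 : F) else 0) = 0 := by
  rw [sum_star_invariant h2]
  · apply Finset.sum_eq_zero
    intro a _
    rw [if_neg]
    intro h
    apply hm
    rw [QL.norm_eq] at h
    exact ⟨a, by rw [← h]; simp; ring⟩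
  · intro z; simp

/-- The parity of the number of `z` of norm `m` for which `z` and `z⁻¹ y` have real parts adding
up to `s`. -/
theorem count_omega (h2 : (2 : K) ≠ 0) {m m' s : K} (hm : ¬ IsSquare m) (y : QL d)
    (hy : QuadraticAlgebra.norm y = m * m') :
    ∑ z : QL d, (if QuadraticAlgebra.norm z = m ∧
        (z * (1 + algebraMap K (QL d) m⁻¹ * star y)).re = s then (1 : F) else 0) =
      if y.im ≠ 0 ∧ 2 * y.re = s ^ 2 - m - m' then 1 else 0 := by
  have hm0 : m ≠ 0 := by rintro rfl; exact hm IsSquare.zero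
  set w : QL d := 1 + algebraMap K (QL d) m⁻¹ * star y with hw
  have hre : ∀ c : K, (1 + algebraMap K (QL d) c * star y).re = 1 + c * y.re := by
    intro c; rw [QuadraticAlgebra.re_add]; simp; rfl
  have him : ∀ c : K, (1 + algebraMap K (QL d) c * star y).im = -(c * y.im) := by
    intro c; rw [QuadraticAlgebra.im_add]; simp; rfl
  have wre : w.re = 1 + m⁻¹ * y.re := hre _
  have wim : w.im = - (m⁻¹ * y.im) := him _
  by_cases hw0 : w = 0
  · have hyim : y.im = 0 := by
      have := congrArg QuadraticAlgebra.im hw0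
      rw [wim] at this
      simpa [hm0] using this
    rw [if_neg (by rintro ⟨h, _⟩; exact h hyim)]
    simp only [hw0, mul_zero, QuadraticAlgebra.re_zero]
    by_cases hs : (0 : K) = s
    · simp only [hs, and_true]
      exact count_norm h2 hm
    · simp only [hs, and_false, if_false, Finset.sum_const_zero]
  · rw [QL.norm_eq] at hy
    have hN : m * QuadraticAlgebra.norm w = m + m' + 2 * y.re := by
      rw [QL.norm_eq, wre, wim]
      field_simp
      linear_combination hy
    have : ∑ z : QL d, (if QuadraticAlgebra.norm z = m ∧ (z * w).re = s then (1 : F) else 0) =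
        ∑ z : QL d, (if QuadraticAlgebra.norm z = m * QuadraticAlgebra.norm w ∧ z.re = s
          then (1 : F) else 0) := by
      refine Fintype.sum_equiv (Equiv.mulRight₀ w hw0) _ _ ?_
      intro z
      simp only [Equiv.mulRight₀_apply]
      rw [map_mul, mul_left_inj' (QL.norm_ne_zero hw0)]
    rw [this, count_norm_re h2, hN]
    congr 1
    apply propext
    constructor
    · intro hs
      refine ⟨?_, by linear_combination -hs⟩
      intro hyim
      rw [hyim] at hy
      have h5 : m * s ^ 2 = (m + y.re) ^ 2 := by linear_combination m * hs - hy
      by_cases hs0 : s = 0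
      · apply hw0
        have h6 : m + y.re = 0 := by
          rw [hs0] at h5
          have : (m + y.re) ^ 2 = 0 := by linear_combination -h5
          exact pow_eq_zero_iff two_ne_zero |>.1 this
        apply QL.ext'
        · rw [wre]; field_simp; simpa using h6
        · rw [wim, hyim]; simp
      · apply hm
        refine ⟨(m + y.re) / s, ?_⟩
        field_simp
        linear_combination h5
    · rintro ⟨_, h⟩; linear_combination -h

/-- The multiplicative substitution `y = z z'` turns the additive convolution of `χ` restricted to two
norm fibres into `kf`. This uses characteristic two through `count_omega`. -/
theorem conv_eq_kf (h2 : (2 : K) ≠ 0) {m m' : K} (s : K) (hm : ¬ IsSquare m) :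
    ∑ z : QL d, ∑ z' : QL d, (if QuadraticAlgebra.norm z = m ∧ QuadraticAlgebra.norm z' = m' ∧
      z.re + z'.re = s then χ z * χ z' else 0) = kf χ (s ^ 2 - m - m') (m * m') := by
  have hm0 : m ≠ 0 := by rintro rfl; exact hm IsSquare.zero
  have step : ∀ z : QL d, ∑ z' : QL d, (if QuadraticAlgebra.norm z = m ∧
      QuadraticAlgebra.norm z' = m' ∧ z.re + z'.re = s then χ z * χ z' else 0) =
      ∑ y : QL d, (if QuadraticAlgebra.norm y = m * m' then χ y else 0) *
        (if QuadraticAlgebra.norm z = m ∧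
        (z * (1 + algebraMap K (QL d) m⁻¹ * star y)).re = s then (1 : F) else 0) := by
    intro z
    by_cases hz : QuadraticAlgebra.norm z = m
    · have hz0 : z ≠ 0 := by rintro rfl; apply hm0; rw [← hz]; simp
      refine Fintype.sum_equiv (Equiv.mulLeft₀ z hz0) _ _ ?_
      intro z'
      simp only [Equiv.mulLeft₀_apply]
      have e1 : z * (1 + algebraMap K (QL d) m⁻¹ * star (z * z')) = z + star z' := by
        rw [star_mul']
        have e2 : z * star z = algebraMap K (QL d) m := by
          rw [← QuadraticAlgebra.algebraMap_norm_eq_mul_star, hz]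
        have e3 : algebraMap K (QL d) m⁻¹ * algebraMap K (QL d) m = 1 := by
          rw [← map_mul, inv_mul_cancel₀ hm0, map_one]
        linear_combination (algebraMap K (QL d) m⁻¹ * star z') * e2 + star z' * e3
      rw [e1]
      have e4 : (z + star z').re = z.re + z'.re := by simp
      rw [e4, map_mul, map_mul, hz, mul_right_inj' hm0]
      simp only [true_and]
      by_cases a1 : QuadraticAlgebra.norm z' = m' <;> by_cases a2 : z.re + z'.re = s <;>
        simp [a1, a2]
    · simp [hz]
  simp_rw [step]
  rw [Finset.sum_comm]
  unfold kf
  apply Finset.sum_congr rfl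
  intro y _
  rw [← Finset.mul_sum]
  by_cases hy : QuadraticAlgebra.norm y = m * m'
  · rw [count_omega h2 hm y hy]
    simp only [hy, true_and, if_true, mul_ite, mul_one, mul_zero]
  · simp [hy]

/-- Fourier factorization of `kf`. -/
theorem sum_Kf_mul_Kf (h1 : Fintype.card K % 4 = 1) {ψ : AddChar K F} (hψ : ψ.IsPrimitive)
    {m m' : K} (s : K) (hm : ¬ IsSquare m) :
    ∑ α : K, ψ (-(α * s)) * (Kf χ ψ α m * Kf χ ψ α m') = kf χ (s ^ 2 - m - m') (m * m') := by
  rw [← conv_eq_kf (two_ne_zero_of_card h1) s hm]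
  unfold Kf
  simp_rw [Finset.sum_mul_sum, Finset.mul_sum]
  rw [Finset.sum_comm]
  apply Finset.sum_congr rfl
  intro z _
  rw [Finset.sum_comm]
  apply Finset.sum_congr rfl
  intro z' _
  by_cases a1 : QuadraticAlgebra.norm z = m <;> by_cases a2 : QuadraticAlgebra.norm z' = m'
  · simp only [a1, a2, if_true, true_and]
    have : ∀ α : K, ψ (-(α * s)) * (χ z * ψ (α * z.re) * (χ z' * ψ (α * z'.re))) =
        χ z * χ z' * ψ (α * (z.re + z'.re - s)) := by
      intro α
      rw [show α * (z.re + z'.re - s) = -(α * s) + (α * z.re + α * z'.re) by ring,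
        AddChar.map_add_eq_mul, AddChar.map_add_eq_mul]
      ring
    simp_rw [this]
    rw [← Finset.mul_sum, fourier h1 hψ, sub_eq_zero]
    simp
  · simp [a1, a2]
  · simp [a1, a2]
  · simp [a1, a2]

end Sums2

/-! ### Orthogonality and independence of the powers of `θ` -/

section Indep

variable {K}

theorem isSquare_mul_of_not {a b : K} (ha : ¬ IsSquare a) (hb : ¬ IsSquare b) :
    IsSquare (a * b) := by
  have ha0 : a ≠ 0 := by rintro rfl; exact ha IsSquare.zero
  have hb0 : b ≠ 0 := by rintro rfl; exact hb IsSquare.zero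
  have h2 : ringChar K ≠ 2 := fun h => ha (FiniteField.isSquare_of_char_two h a)
  rw [← quadraticChar_one_iff_isSquare (mul_ne_zero ha0 hb0), map_mul,
    quadraticChar_neg_one_iff_not_isSquare.2 ha,
    quadraticChar_neg_one_iff_not_isSquare.2 hb]
  norm_num

theorem exists_sq_mul_of_not {a b : K} (ha : ¬ IsSquare a) (hb : ¬ IsSquare b) :
    ∃ c : K, c ≠ 0 ∧ a = c ^ 2 * b := by
  have ha0 : a ≠ 0 := by rintro rfl; exact ha IsSquare.zero
  have hb0 : b ≠ 0 := by rintro rfl; exact hb IsSquare.zero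
  obtain ⟨r, hr⟩ := isSquare_mul_of_not ha hb
  refine ⟨r / b, ?_, ?_⟩
  · intro h
    have : r = 0 := by simpa [hb0] using h
    rw [this] at hr
    simp [ha0, hb0] at hr
  · field_simp; linear_combination hr

theorem exists_neg_one_sq (h1 : Fintype.card K % 4 = 1) : ∃ i : K, i ≠ 0 ∧ i ^ 2 = -1 := by
  obtain ⟨i, hi⟩ := (FiniteField.isSquare_neg_one_iff (F := K)).2 (by omega)
  refine ⟨i, ?_, by rw [hi]; ring⟩
  rintro rfl
  simp at hi

theorem isSquare_neg_iff (h1 : Fintype.card K % 4 = 1) {a : K} : IsSquare (-a) ↔ IsSquare a := by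
  obtain ⟨i, hi0, hi⟩ := exists_neg_one_sq (K := K) h1
  constructor
  · rintro ⟨r, hr⟩; exact ⟨i * r, by linear_combination -hr - r ^ 2 * hi⟩
  · rintro ⟨r, hr⟩; exact ⟨i * r, by linear_combination -hr - r ^ 2 * hi⟩

variable {d : K} [hd : Fact (∀ r : K, r ^ 2 ≠ d + 0 * r)]
variable {F : Type} [Field F] [CharP F 2]

/-- The properties of the character `θ` on which the construction rests. -/
structure ThetaData (θ : MulChar (QL d) F) (n : ℕ) : Prop where
  order : orderOf θ = 2 * n + 1
  triv : ∀ c : K, c ≠ 0 → θ (algebraMap K (QL d) c) = 1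
  sq : ∀ z : QL d, θ z = 1 → z.re * z.im = 0

variable {θ : MulChar (QL d) F} {n : ℕ}

theorem ThetaData.good (hθ : ThetaData θ n) (j : Fin n) : GoodChar (θ ^ (j.1 + 1)) where
  triv c hc := by rw [MulChar.pow_apply' _ (by omega), hθ.triv c hc, one_pow]
  ne_one h := by
    have := orderOf_dvd_of_pow_eq_one h
    rw [hθ.order] at this
    have := Nat.le_of_dvd (by omega) this
    have := j.2
    omega

theorem norm_re_cases {z y : QL d} (hn : QuadraticAlgebra.norm z = QuadraticAlgebra.norm y)
    (hr : z.re = y.re) : z = y ∨ z = star y := by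
  have hd0 : d ≠ 0 := by rintro rfl; exact QL.not_sq (d := (0 : K)) (IsSquare.zero)
  rw [QL.norm_eq, QL.norm_eq, hr] at hn
  have h3 : d * ((z.im - y.im) * (z.im + y.im)) = 0 := by linear_combination -hn
  rcases mul_eq_zero.1 ((mul_eq_zero.1 h3).resolve_left hd0) with h | h
  · left; exact QL.ext' hr (sub_eq_zero.1 h)
  · right
    apply QL.ext'
    · simp [hr]
    · simp; linear_combination h

/-- The elements with a given norm and real part form a conjugate pair. -/
theorem sum_pair (h2 : (2 : K) ≠ 0) (f : QL d → F) {y : QL d} (hy : y.im ≠ 0) {a : K}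
    (ha : QuadraticAlgebra.norm y = a) :
    ∑ z : QL d, (if QuadraticAlgebra.norm z = a ∧ z.re = y.re
      then f z else 0) = f y + f (star y) := by
  have hne : y ≠ star y := by
    intro h
    have h3 := congrArg QuadraticAlgebra.im h
    have h4 : y.im = -y.im := by simpa using h3
    apply hy
    have : (2 : K) * y.im = 0 := by linear_combination h4
    exact (mul_eq_zero.1 this).resolve_left h2
  rw [← Finset.sum_pair hne, ← Finset.sum_filter]
  apply Finset.sum_congr _ (fun _ _ => rfl)
  ext z
  simp only [Finset.mem_filter, Finset.mem_univ, true_and, Finset.mem_insert,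
    Finset.mem_singleton]
  constructor
  · rintro ⟨h, h'⟩; exact norm_re_cases (h.trans ha.symm) h'
  · rintro (rfl | rfl)
    · exact ⟨ha, rfl⟩
    · constructor
      · simpa using ha
      · simp

/-- A geometric sum: for `y` of norm `r²` and trace `b` the left-hand side is the sum of all nontrivial
powers of `θ y`, a root of unity of odd order, and `θ y ≠ 1` because `-1` is a square in `K`. -/
theorem sum_kf (h1 : Fintype.card K % 4 = 1) (hθ : ThetaData θ n) (b : K) {r : K} :
    ∑ j : Fin n, kf (θ ^ (j.1 + 1)) b (r ^ 2) =
      if IsSquare (b ^ 2 - 4 * r ^ 2) then 0 else 1 := by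
  have h2 : (2 : K) ≠ 0 := two_ne_zero_of_card h1
  split_ifs with hsq
  · exact Finset.sum_eq_zero fun j _ => kf_eq_zero_of_isSquare h2 hsq
  obtain ⟨e, he0, he⟩ := exists_sq_mul_of_not hsq (QL.not_sq (d := d))
  set y : QL d := ⟨b / 2, e / 2⟩ with hy
  have hyim : y.im ≠ 0 := by simp [hy, he0, h2]
  have hyn : QuadraticAlgebra.norm y = r ^ 2 := by
    rw [QL.norm_eq]; simp only [hy]; field_simp; linear_combination he
  have hy0 : y ≠ 0 := by rintro h; rw [h] at hyim; exact hyim rfl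
  have hk : ∀ j : Fin n, kf (θ ^ (j.1 + 1)) b (r ^ 2) =
      θ y ^ (j.1 + 1) + (θ y)⁻¹ ^ (j.1 + 1) := by
    intro j
    have h3 := sum_pair h2 (fun z => (θ ^ (j.1 + 1)) z) hyim hyn
    rw [(hθ.good j).map_star hy0, MulChar.pow_apply' _ (by omega), ← inv_pow] at h3
    rw [← h3]
    unfold kf
    apply Finset.sum_congr rfl
    intro z _
    congr 1
    apply propext
    constructor
    · rintro ⟨_, h4, h5⟩
      refine ⟨h4, ?_⟩
      simp only [hy]; field_simp; linear_combination h5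
    · rintro ⟨h4, h5⟩
      refine ⟨?_, h4, ?_⟩
      · rcases norm_re_cases (h4.trans hyn.symm) h5 with h | h
        · rw [h]; exact hyim
        · rw [h]; simpa using hyim
      · rw [h5]; simp only [hy]; field_simp
  simp_rw [hk]
  set ε := θ y with hε
  have hεN : ε ^ (2 * n + 1) = 1 := by
    rw [hε, ← MulChar.pow_apply' _ (by omega), ← hθ.order, pow_orderOf_eq_one]
    exact MulChar.one_apply (IsUnit.mk0 y hy0)
  have hε1 : ε ≠ 1 := by
    intro h
    have h4 := hθ.sq y h
    have h5 : b = 0 := by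
      have := (mul_eq_zero.1 h4).resolve_right hyim
      simpa [hy, h2] using this
    apply hsq
    obtain ⟨i, _, hi⟩ := exists_neg_one_sq (K := K) h1
    exact ⟨2 * i * r, by rw [h5]; linear_combination -4 * r ^ 2 * hi⟩
  have hε0 : ε ≠ 0 := by rintro h; rw [h] at hεN; simp at hεN
  have hgeom : ∑ i ∈ Finset.range (2 * n + 1), ε ^ i = 0 := by
    have := geom_sum_mul ε (2 * n + 1)
    rw [hεN, sub_self] at this
    exact (mul_eq_zero.1 this).resolve_right (sub_ne_zero.2 hε1)
  rw [Finset.sum_range_succ', pow_zero, two_mul, Finset.sum_range_add] at hgeom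
  rw [Finset.sum_add_distrib]
  have e1 : ∑ j : Fin n, ε ^ (j.1 + 1) = ∑ i ∈ Finset.range n, ε ^ (i + 1) :=
    Fin.sum_univ_eq_sum_range (fun i => ε ^ (i + 1)) n
  have e2 : ∑ j : Fin n, ε⁻¹ ^ (j.1 + 1) = ∑ i ∈ Finset.range n, ε ^ (n + i + 1) := by
    rw [Fin.sum_univ_eq_sum_range (fun i => ε⁻¹ ^ (i + 1)) n, ← Finset.sum_range_reflect]
    apply Finset.sum_congr rfl
    intro i hi
    have hi' := Finset.mem_range.1 hi
    rw [inv_pow]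
    apply inv_eq_of_mul_eq_one_right
    rw [← pow_add, ← hεN]
    congr 1
    omega
  rw [e1, e2]
  have h2F : (1 : F) + 1 = 0 := add_self_char_two 1
  linear_combination hgeom - h2F

theorem fourier_inj (h1 : Fintype.card K % 4 = 1) {ψ : AddChar K F} (hψ : ψ.IsPrimitive)
    (g : K → F) (h : ∀ s, ∑ α, g α * ψ (α * s) = 0) (β : K) : g β = 0 := by
  have h3 : ∑ s, (∑ α, g α * ψ (α * s)) * ψ (s * (-β)) = 0 := by
    apply Finset.sum_eq_zero; intro s _; rw [h s, zero_mul]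
  simp_rw [Finset.sum_mul] at h3
  rw [Finset.sum_comm] at h3
  have h4 : ∀ α, ∑ s, g α * ψ (α * s) * ψ (s * (-β)) = g α * if α = β then 1 else 0 := by
    intro α
    have : ∀ s, g α * ψ (α * s) * ψ (s * (-β)) = g α * ψ (s * (α - β)) := by
      intro s
      rw [show s * (α - β) = α * s + s * (-β) by ring, AddChar.map_add_eq_mul, mul_assoc]
    simp_rw [this]
    rw [← Finset.mul_sum, fourier h1 hψ]
    simp [sub_eq_zero]
  simp_rw [h4] at h3
  simpa using h3

/-- The even parts of the characters `θ, θ², …, θⁿ` are linearly independent. -/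
theorem dedekind (hθ : ThetaData θ n) (c : Fin n → F)
    (h : ∀ z : QL d, z ≠ 0 → ∑ j, c j * ((θ ^ (j.1 + 1)) z + (θ ^ (j.1 + 1)) (star z)) = 0) :
    ∀ j, c j = 0 := by
  set v : Fin n ⊕ Fin n → (QL d →* F) :=
    Sum.elim (fun j => (θ ^ (j.1 + 1)).toMonoidHom) (fun j => ((θ ^ (j.1 + 1))⁻¹).toMonoidHom)
    with hv
  have hinj0 : ∀ χ χ' : MulChar (QL d) F, χ.toMonoidHom = χ'.toMonoidHom → χ = χ' := by
    intro χ χ' h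
    rw [MulChar.ext_iff]
    intro a
    exact DFunLike.congr_fun h (a : QL d)
  have hpow : ∀ i j : Fin n, θ ^ (i.1 + 1) = θ ^ (j.1 + 1) → i = j := by
    intro i j h
    rw [pow_inj_mod, hθ.order, Nat.mod_eq_of_lt (by omega), Nat.mod_eq_of_lt (by omega)] at h
    ext; omega
  have hpow2 : ∀ i j : Fin n, θ ^ (i.1 + 1) ≠ (θ ^ (j.1 + 1))⁻¹ := by
    intro i j h
    rw [eq_inv_iff_mul_eq_one, ← pow_add] at h
    have := orderOf_dvd_of_pow_eq_one h
    rw [hθ.order] at this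
    have := Nat.le_of_dvd (by omega) this
    omega
  have hinj : Function.Injective v := by
    rintro (i | i) (j | j) hij
    · exact congrArg _ (hpow i j (hinj0 _ _ hij))
    · exact absurd (hinj0 _ _ hij) (hpow2 i j)
    · exact absurd (hinj0 _ _ hij).symm (hpow2 j i)
    · exact congrArg _ (hpow i j (inv_injective (hinj0 _ _ hij)))
  have hli := (linearIndependent_monoidHom (QL d) F).comp v hinj
  rw [Fintype.linearIndependent_iff] at hli
  have h3 := hli (Sum.elim c c) (by
    funext z
    simp only [Function.comp, Fintype.sum_sum_type, Sum.elim_inl, Sum.elim_inr, hv,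
      Finset.sum_apply, Pi.smul_apply, smul_eq_mul, Pi.zero_apply]
    change ∑ j, c j * (θ ^ (j.1 + 1)) z + ∑ j, c j * (θ ^ (j.1 + 1))⁻¹ z = 0
    by_cases hz : z = 0
    · subst hz
      simp [MulChar.map_zero]
    · rw [← h z hz, ← Finset.sum_add_distrib]
      apply Finset.sum_congr rfl
      intro j _
      rw [(hθ.good j).map_star hz, MulChar.inv_apply_eq_inv', mul_add])
  intro j
  exact h3 (Sum.inl j)

/-- The independence already holds on the norm fibre over `d`: every nonzero `z` can be moved into it by
a factor on which all powers of `θ` are `1`. -/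
theorem char_indep_of_norm (h1 : Fintype.card K % 4 = 1) (hθ : ThetaData θ n) (c : Fin n → F)
    (h : ∀ z : QL d, QuadraticAlgebra.norm z = d →
      ∑ j, c j * ((θ ^ (j.1 + 1)) z + (θ ^ (j.1 + 1)) (star z)) = 0) :
    ∀ j, c j = 0 := by
  apply dedekind hθ c
  intro z hz
  have hd0 : d ≠ 0 := by rintro rfl; exact QL.not_sq (d := (0 : K)) (IsSquare.zero)
  -- a multiplier `w` with `w²` rational moves `z` to an element of norm `d`
  obtain ⟨w, hw, hwn⟩ : ∃ w : QL d, (∀ j : Fin n, (θ ^ (j.1 + 1)) w = 1) ∧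
      QuadraticAlgebra.norm (w * z) = d := by
    by_cases hs : IsSquare (QuadraticAlgebra.norm z)
    · obtain ⟨r, hr⟩ := hs
      have hr0 : r ≠ 0 := by
        rintro rfl
        exact QL.norm_ne_zero hz (by simpa using hr)
      obtain ⟨i, hi0, hi⟩ := exists_neg_one_sq (K := K) h1
      refine ⟨⟨0, i / r⟩, ?_, ?_⟩
      · intro j
        apply sq_eq_one_char_two
        rw [← map_pow]
        have : (⟨0, i / r⟩ : QL d) ^ 2 = algebraMap K (QL d) (d * (i / r) ^ 2) := by
          rw [sq]
          apply QL.ext'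
          · simp only [QuadraticAlgebra.re_mul, QuadraticAlgebra.algebraMap_re]; ring
          · simp only [QuadraticAlgebra.im_mul, QuadraticAlgebra.algebraMap_im]; ring
        rw [this]
        exact (hθ.good j).triv _ (mul_ne_zero hd0 (pow_ne_zero 2 (div_ne_zero hi0 hr0)))
      · rw [map_mul, hr, QL.norm_eq]
        field_simp
        linear_combination -d * hi
    · obtain ⟨e, he0, he⟩ := exists_sq_mul_of_not (QL.not_sq (d := d)) hs
      refine ⟨algebraMap K (QL d) e, fun j => (hθ.good j).triv e he0, ?_⟩
      rw [map_mul, QuadraticAlgebra.norm_algebraMap, ← he]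
  rw [← h (w * z) hwn]
  apply Finset.sum_congr rfl
  intro j _
  have hw0 : w ≠ 0 := by
    rintro rfl
    have := hw j
    rw [MulChar.map_zero] at this
    exact zero_ne_one this
  rw [star_mul', map_mul, map_mul, (hθ.good j).map_star hw0, hw j]
  simp

/-- Linear independence of the functions `(s, m) ↦ ψ(α s) Kf(α, m)`. -/
theorem indep_coord (h1 : Fintype.card K % 4 = 1) (hθ : ThetaData θ n) {ψ : AddChar K F}
    (hψ : ψ.IsPrimitive) (c : Fin n → K → F)
    (h : ∀ s m : K, ¬ IsSquare m →
      ∑ j, ∑ α, c j α * (ψ (α * s) * Kf (θ ^ (j.1 + 1)) ψ α m) = 0)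
    (j : Fin n) (α : K) (hα : α ≠ 0) : c j α = 0 := by
  have h2 : (2 : K) ≠ 0 := two_ne_zero_of_card h1
  have step1 : ∀ m : K, ¬ IsSquare m → ∀ α, ∑ j, c j α * Kf (θ ^ (j.1 + 1)) ψ α m = 0 := by
    intro m hm
    apply fourier_inj h1 hψ
    intro s
    rw [← h s m hm, Finset.sum_comm]
    apply Finset.sum_congr rfl
    intro α _
    rw [Finset.sum_mul]
    apply Finset.sum_congr rfl
    intro j _
    ring
  have step2 : ∀ β : K, ∑ j, c j α * Kf (θ ^ (j.1 + 1)) ψ β d = 0 := by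
    intro β
    by_cases hβ : β = 0
    · subst hβ
      apply Finset.sum_eq_zero
      intro j _
      rw [Kf_zero (hθ.good j), mul_zero]
    · have hc : β / α ≠ 0 := div_ne_zero hβ hα
      have := step1 ((β / α) ^ 2 * d) (by
        rintro ⟨r, hr⟩
        apply QL.not_sq (d := d)
        exact ⟨r / (β / α), by field_simp; field_simp at hr; linear_combination hr⟩) α
      rw [← this]
      apply Finset.sum_congr rfl
      intro j _
      rw [Kf_scale (hθ.good j) ψ hc, div_mul_cancel₀ _ hα]
  refine char_indep_of_norm h1 hθ (fun j => c j α) ?_ j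
  intro y hy
  have hyim : y.im ≠ 0 := by
    intro h
    rw [QL.norm_eq, h] at hy
    exact QL.not_sq (d := d) ⟨y.re, by linear_combination -hy⟩
  have step3 := fourier_inj h1 hψ (fun a => ∑ z : QL d, if QuadraticAlgebra.norm z = d ∧ z.re = a
    then ∑ j, c j α * (θ ^ (j.1 + 1)) z else 0) (by
      intro β
      refine Eq.trans ?_ (step2 β)
      unfold Kf
      simp_rw [Finset.sum_mul, Finset.mul_sum]
      rw [Finset.sum_comm]
      rw [Finset.sum_comm (s := (Finset.univ : Finset (Fin n)))]
      apply Finset.sum_congr rfl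
      intro z _
      rw [Finset.sum_eq_single z.re]
      · by_cases hz : QuadraticAlgebra.norm z = d
        · simp only [hz, and_self, if_true, Finset.sum_mul]
          apply Finset.sum_congr rfl
          intro j _
          rw [mul_comm β]; ring
        · simp [hz]
      · intro b _ hb
        rw [if_neg, zero_mul]
        rintro ⟨_, h⟩; exact hb h.symm
      · simp) y.re
  rw [sum_pair h2 (fun z => ∑ j, c j α * (θ ^ (j.1 + 1)) z) hyim hy] at step3
  rw [← step3, ← Finset.sum_add_distrib]
  apply Finset.sum_congr rfl
  intro j _
  rw [mul_add]

end Indep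

/-! ### Internal points and the action of `2 × 2` matrices -/

section Geometry

variable {K}

/-- The bilinear form with `bf v v = -2 Q(v)`; two points are conjugate iff it vanishes. -/
def bf (v w : Fin 3 → K) : K := v 0 * w 2 - 2 * (v 1 * w 1) + v 2 * w 0

theorem bf_comm (v w : Fin 3 → K) : bf v w = bf w v := by unfold bf; ring

theorem bf_smul (c c' : K) (v w : Fin 3 → K) : bf (c • v) (c' • w) = c * c' * bf v w := by
  simp only [bf, Pi.smul_apply, smul_eq_mul]; ring

theorem Qf_smul (c : K) (v : Fin 3 → K) : Qf K (c • v) = c ^ 2 * Qf K v := by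
  simp only [Qf, Pi.smul_apply, smul_eq_mul]; ring

theorem isSquare_sq_mul {c : K} (hc : c ≠ 0) (a : K) : IsSquare (c ^ 2 * a) ↔ IsSquare a := by
  constructor
  · rintro ⟨r, hr⟩; exact ⟨r / c, by field_simp; linear_combination hr⟩
  · rintro ⟨r, hr⟩; exact ⟨c * r, by rw [hr]; ring⟩

theorem coord_ne_zero {v : Fin 3 → K} (hv : ¬ IsSquare (Qf K v)) : v 0 ≠ 0 := by
  intro h
  apply hv
  exact ⟨v 1, by simp only [Qf, h]; ring⟩

/-- The representative of an internal point with first coordinate `1`. -/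
def nv (p : Ipts K) : Fin 3 → K := (p.1.rep 0)⁻¹ • p.1.rep

theorem nv_zero (p : Ipts K) : nv p 0 = 1 := by
  have := coord_ne_zero (K := K) p.2
  simp [nv, this]

theorem nv_rep (p : Ipts K) : p.1.rep = p.1.rep 0 • nv p := by
  have := coord_ne_zero (K := K) p.2
  rw [nv, smul_smul, mul_inv_cancel₀ this, one_smul]

theorem nv_internal (p : Ipts K) : ¬ IsSquare (Qf K (nv p)) := by
  have h0 := coord_ne_zero (K := K) p.2
  rw [nv, Qf_smul, isSquare_sq_mul (inv_ne_zero h0)]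
  exact p.2

theorem nv_inj {p r : Ipts K} (h : nv p = nv r) : p = r := by
  apply Subtype.ext
  have hp := coord_ne_zero (K := K) p.2
  have hr := coord_ne_zero (K := K) r.2
  rw [← p.1.mk_rep, ← r.1.mk_rep, Projectivization.mk_eq_mk_iff']
  refine ⟨p.1.rep 0 * (r.1.rep 0)⁻¹, ?_⟩
  have h3 := nv_rep p
  rw [h] at h3
  exact (mul_smul _ _ _).trans h3.symm

/-- The internal point spanned by a vector with nonsquare `Q`. -/
def mkI (v : Fin 3 → K) (hv : ¬ IsSquare (Qf K v)) : Ipts K :=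
  ⟨Projectivization.mk K v (by rintro rfl; exact coord_ne_zero hv rfl), by
    obtain ⟨a, ha⟩ := Projectivization.exists_smul_eq_mk_rep K v
      (by rintro rfl; exact coord_ne_zero hv rfl)
    unfold Internal Nonsq
    rw [← ha, Units.smul_def, Qf_smul, isSquare_sq_mul a.ne_zero]
    exact hv⟩

theorem nv_mkI (v : Fin 3 → K) (hv : ¬ IsSquare (Qf K v)) : nv (mkI v hv) = (v 0)⁻¹ • v := by
  have h0 := coord_ne_zero hv
  obtain ⟨a, ha⟩ := Projectivization.exists_smul_eq_mk_rep K v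
      (by rintro rfl; exact h0 rfl)
  unfold nv mkI
  simp only
  rw [← ha, Units.smul_def, Pi.smul_apply, smul_eq_mul, smul_smul]
  congr 1
  have := a.ne_zero
  field_simp

theorem nv_eq_of_smul {p r : Ipts K} {c : K} (h : nv p = c • nv r) : p = r := by
  have h3 := congrFun h 0
  rw [Pi.smul_apply, nv_zero, nv_zero, smul_eq_mul, mul_one] at h3
  rw [← h3, one_smul] at h
  exact nv_inj h

theorem mkI_eq_iff {v : Fin 3 → K} {hv : ¬ IsSquare (Qf K v)} {r : Ipts K} :
    mkI v hv = r ↔ ∃ c : K, v = c • nv r := by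
  constructor
  · rintro rfl
    refine ⟨v 0, ?_⟩
    rw [nv_mkI, smul_smul, mul_inv_cancel₀ (coord_ne_zero hv), one_smul]
  · rintro ⟨c, hc⟩
    apply nv_eq_of_smul (c := (v 0)⁻¹ * c)
    rw [nv_mkI]
    rw [mul_smul, ← hc]

theorem onPerp_iff (p r : Ipts K) : OnPerp K p.1 r.1 ↔ bf (nv p) (nv r) = 0 := by
  have hp := coord_ne_zero (K := K) p.2
  have hr := coord_ne_zero (K := K) r.2
  unfold OnPerp perpDot nv
  rw [bf_smul]
  have : bf p.1.rep r.1.rep = r.1.rep 0 * p.1.rep 2 + r.1.rep 1 * (-2 * p.1.rep 1) +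
      r.1.rep 2 * p.1.rep 0 := by unfold bf; ring
  rw [← this]
  simp [hp, hr]

/-! The action of `GL(2,q)` on `PG(2,q)` through its symmetric square. -/

/-- The symmetric square of the matrix with rows `(a, b)` and `(c, e)`. -/
def Mg (a b c e : K) : Matrix (Fin 3) (Fin 3) K :=
  !![a^2, a*b, b^2; 2*a*c, a*e + b*c, 2*b*e; c^2, c*e, e^2]

theorem vecMul_Mg (a b c e : K) (v : Fin 3 → K) :
    Matrix.vecMul v (Mg a b c e) =
      ![v 0 * a ^ 2 + v 1 * (2 * a * c) + v 2 * c ^ 2,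
        v 0 * (a * b) + v 1 * (a * e + b * c) + v 2 * (c * e),
        v 0 * b ^ 2 + v 1 * (2 * b * e) + v 2 * e ^ 2] := by
  ext i
  fin_cases i <;> simp [Mg, Matrix.vecMul, dotProduct, Fin.sum_univ_three]

theorem Qf_vecMul (a b c e : K) (v : Fin 3 → K) :
    Qf K (Matrix.vecMul v (Mg a b c e)) = (a * e - b * c) ^ 2 * Qf K v := by
  rw [vecMul_Mg]; simp [Qf]; ring

theorem bf_vecMul (a b c e : K) (v w : Fin 3 → K) :
    bf (Matrix.vecMul v (Mg a b c e)) (Matrix.vecMul w (Mg a b c e)) =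
      (a * e - b * c) ^ 2 * bf v w := by
  rw [vecMul_Mg, vecMul_Mg]; simp [bf]; ring

theorem vecMul_vecMul_Mg (a b c e a' b' c' e' : K) (v : Fin 3 → K) :
    Matrix.vecMul (Matrix.vecMul v (Mg a b c e)) (Mg a' b' c' e') =
      Matrix.vecMul v (Mg (a * a' + b * c') (a * b' + b * e') (c * a' + e * c')
        (c * b' + e * e')) := by
  rw [vecMul_Mg, vecMul_Mg, vecMul_Mg]
  ext i
  fin_cases i <;> simp <;> ring

/-- The point map induced by a matrix on the internal points (identity as default value). -/
def mv (M : Matrix (Fin 3) (Fin 3) K) (p : Ipts K) : Ipts K :=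
  if h : ¬ IsSquare (Qf K (Matrix.vecMul (nv p) M)) then mkI _ h else p

theorem mv_eq_iff {a b c e : K} (h : a * e - b * c ≠ 0) (p r : Ipts K) :
    mv (Mg a b c e) p = r ↔ ∃ t : K, Matrix.vecMul (nv p) (Mg a b c e) = t • nv r := by
  have h3 : ¬ IsSquare (Qf K (Matrix.vecMul (nv p) (Mg a b c e))) := by
    rw [Qf_vecMul, isSquare_sq_mul h]; exact nv_internal p
  rw [mv, dif_pos h3, mkI_eq_iff]

theorem mv_spec {a b c e : K} (h : a * e - b * c ≠ 0) (p : Ipts K) :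
    ∃ t : K, t ≠ 0 ∧ Matrix.vecMul (nv p) (Mg a b c e) = t • nv (mv (Mg a b c e) p) := by
  obtain ⟨t, ht⟩ := (mv_eq_iff h p _).1 rfl
  refine ⟨t, ?_, ht⟩
  rintro rfl
  have h3 := Qf_vecMul a b c e (nv p)
  rw [ht, Qf_smul] at h3
  have h4 : (a * e - b * c) ^ 2 * Qf K (nv p) = 0 := by rw [← h3]; ring
  rcases mul_eq_zero.1 h4 with h5 | h5
  · exact h (pow_eq_zero_iff two_ne_zero |>.1 h5)
  · apply nv_internal p; rw [h5]; exact IsSquare.zero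

theorem mv_injective {a b c e : K} (h : a * e - b * c ≠ 0) :
    Function.Injective (mv (Mg a b c e)) := by
  intro p r hpr
  obtain ⟨t, ht0, ht⟩ := mv_spec h p
  obtain ⟨t', ht0', ht'⟩ := mv_spec h r
  rw [hpr] at ht
  have h3 : Matrix.vecMul (nv p) (Mg a b c e) =
      (t * t'⁻¹) • Matrix.vecMul (nv r) (Mg a b c e) := by
    rw [ht', ht, smul_smul, mul_assoc, inv_mul_cancel₀ ht0', mul_one]
  have h4 := congrArg (fun w => Matrix.vecMul w (Mg e (-b) (-c) a)) h3
  simp only [Matrix.smul_vecMul, vecMul_vecMul_Mg] at h4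
  have h5 : ∀ v : Fin 3 → K, Matrix.vecMul v (Mg (a * e + b * -c) (a * -b + b * a)
      (c * e + e * -c) (c * -b + e * a)) = (a * e - b * c) ^ 2 • v := by
    intro v
    rw [vecMul_Mg]
    ext i
    fin_cases i <;> simp <;> ring
  rw [h5, h5, smul_comm] at h4
  exact nv_eq_of_smul (smul_right_injective _ (pow_ne_zero 2 h) h4)

theorem mv_bijective {a b c e : K} (h : a * e - b * c ≠ 0) :
    Function.Bijective (mv (Mg a b c e)) :=
  Finite.injective_iff_bijective.1 (mv_injective h)

theorem mv_mv {a b c e a' b' c' e' : K} (h : a * e - b * c ≠ 0) (h' : a' * e' - b' * c' ≠ 0)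
    (p : Ipts K) : mv (Mg a' b' c' e') (mv (Mg a b c e) p) =
      mv (Mg (a * a' + b * c') (a * b' + b * e') (c * a' + e * c') (c * b' + e * e')) p := by
  obtain ⟨t, ht0, ht⟩ := mv_spec h p
  have h3 : (a * a' + b * c') * (c * b' + e * e') - (a * b' + b * e') * (c * a' + e * c') ≠ 0 := by
    have : (a * a' + b * c') * (c * b' + e * e') - (a * b' + b * e') * (c * a' + e * c') =
      (a * e - b * c) * (a' * e' - b' * c') := by ring
    rw [this]; exact mul_ne_zero h h'
  obtain ⟨t', ht0', ht'⟩ := mv_spec h3 p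
  rw [mv_eq_iff h']
  have h4 : nv (mv (Mg a b c e) p) = t⁻¹ • Matrix.vecMul (nv p) (Mg a b c e) := by
    rw [ht, smul_smul, inv_mul_cancel₀ ht0, one_smul]
  rw [h4, Matrix.smul_vecMul, vecMul_vecMul_Mg, ht', smul_smul]
  exact ⟨_, rfl⟩

theorem bf_mv {a b c e : K} (h : a * e - b * c ≠ 0) (p r : Ipts K) :
    bf (nv (mv (Mg a b c e) p)) (nv (mv (Mg a b c e) r)) = 0 ↔ bf (nv p) (nv r) = 0 := by
  obtain ⟨t, ht0, ht⟩ := mv_spec h p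
  obtain ⟨t', ht0', ht'⟩ := mv_spec h r
  have := bf_vecMul a b c e (nv p) (nv r)
  rw [ht, ht', bf_smul] at this
  constructor
  · intro h3
    rw [h3, mul_zero] at this
    exact (mul_eq_zero.1 this.symm).resolve_left (pow_ne_zero 2 h)
  · intro h3
    rw [h3, mul_zero] at this
    exact (mul_eq_zero.1 this).resolve_left (mul_ne_zero ht0 ht0')

theorem actPt_eq {a b c e : K} (h : a * e - b * c ≠ 0) (p : Ipts K) :
    actPt K (Mg a b c e) p.1 = (mv (Mg a b c e) p).1 := by
  have hp := coord_ne_zero (K := K) p.2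
  obtain ⟨t, ht0, ht⟩ := mv_spec h p
  have h3 : Matrix.vecMul p.1.rep (Mg a b c e) =
      (p.1.rep 0 * t * ((mv (Mg a b c e) p).1.rep 0)⁻¹) • (mv (Mg a b c e) p).1.rep := by
    conv_lhs => rw [nv_rep p, Matrix.smul_vecMul, ht, smul_smul]
    rw [mul_smul (_ * _)]
    rfl
  have h4 : Matrix.vecMul p.1.rep (Mg a b c e) ≠ 0 := by
    rw [h3]
    apply smul_ne_zero
    · exact mul_ne_zero (mul_ne_zero hp ht0)
        (inv_ne_zero (coord_ne_zero (K := K) (mv (Mg a b c e) p).2))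
    · exact Projectivization.rep_nonzero _
  rw [actPt, dif_pos h4]
  conv_rhs => rw [← (mv (Mg a b c e) p).1.mk_rep]
  rw [Projectivization.mk_eq_mk_iff']
  exact ⟨_, h3.symm⟩

/-- The group action on functions is translation of the argument along `mv`. -/
theorem actF_mv {a b c e : K} (h : a * e - b * c ≠ 0) (x : Ipts K → F2bar) (p : Ipts K) :
    actF K (Mg a b c e) x (mv (Mg a b c e) p) = x p := by
  unfold actF actMat
  rw [Matrix.vecMulLinear_apply, Matrix.vecMul, dotProduct]
  rw [Finset.sum_eq_single p]
  · simp [actPt_eq h]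
  · intro r _ hr
    rw [Matrix.of_apply, actPt_eq h, if_neg, mul_zero]
    intro h3
    exact hr (mv_injective h (Subtype.ext h3))
  · simp

end Geometry

/-! ### Reflections, the conjugacy matrix and the kernels `Pm` -/

section Incidence

variable {K}

/-- The reflection with centre `x`, as the symmetric square of a traceless matrix. -/
def Rm (x : Fin 3 → K) : Matrix (Fin 3) (Fin 3) K := Mg (x 1) (x 2) (-(x 0)) (-(x 1))

theorem Rm_det (x : Fin 3 → K) : x 1 * -(x 1) - x 2 * -(x 0) = - Qf K x := by
  unfold Qf; ring

theorem vecMul_Rm (x v : Fin 3 → K) :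
    Matrix.vecMul v (Rm x) = Qf K x • v + bf v x • x := by
  rw [Rm, vecMul_Mg]
  ext i
  fin_cases i <;> simp [Qf, bf] <;> ring

theorem Rm_det_ne {x : Fin 3 → K} (hx : Qf K x ≠ 0) : x 1 * -(x 1) - x 2 * -(x 0) ≠ 0 := by
  rw [Rm_det]; exact neg_ne_zero.2 hx

theorem mv_Rm_involutive {x : Fin 3 → K} (hx : Qf K x ≠ 0) (p : Ipts K) :
    mv (Rm x) (mv (Rm x) p) = p := by
  have h := Rm_det_ne hx
  unfold Rm
  rw [mv_mv h h, mv_eq_iff]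
  · refine ⟨Qf K x ^ 2, ?_⟩
    rw [vecMul_Mg]
    ext i
    fin_cases i <;> simp [Qf] <;> ring
  · have : ∀ a b c e : K, (a * a + b * c) * (c * b + e * e) - (a * b + b * e) * (c * a + e * c) =
      (a * e - b * c) * (a * e - b * c) := by intros; ring
    rw [this]; exact mul_ne_zero h h

theorem mv_Rm_of_perp {x : Fin 3 → K} (hx : Qf K x ≠ 0) {p : Ipts K} (hp : bf (nv p) x = 0) :
    mv (Rm x) p = p := by
  unfold Rm
  rw [mv_eq_iff (Rm_det_ne hx)]
  refine ⟨Qf K x, ?_⟩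
  have := vecMul_Rm x (nv p)
  rw [Rm] at this
  rw [this, hp, zero_smul, add_zero]

theorem mv_Rm_fixed {x : Fin 3 → K} (hx : Qf K x ≠ 0) {r : Ipts K} (hr : mv (Rm x) r = r) :
    bf (nv r) x = 0 ∨ ∃ c : K, nv r = c • x := by
  unfold Rm at hr
  rw [mv_eq_iff (Rm_det_ne hx)] at hr
  obtain ⟨t, ht⟩ := hr
  have := vecMul_Rm x (nv r)
  rw [Rm, ht] at this
  by_cases hb : bf (nv r) x = 0
  · exact Or.inl hb
  right
  have h3 : (t - Qf K x) • nv r = bf (nv r) x • x := by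
    rw [sub_smul, this, add_sub_cancel_left]
  have h4 : t - Qf K x ≠ 0 := by
    intro h4
    rw [h4, zero_smul] at h3
    have h5 := (smul_eq_zero.1 h3.symm).resolve_left hb
    rw [h5] at hx
    apply hx; simp [Qf]
  refine ⟨(t - Qf K x)⁻¹ * bf (nv r) x, ?_⟩
  rw [mul_smul, ← h3, smul_smul, inv_mul_cancel₀ h4, one_smul]

/-- In characteristic two, a function invariant under a reflection and vanishing on its fixed
points sums to zero. -/
theorem sum_refl {F : Type} [Field F] [CharP F 2] {x : Fin 3 → K} (hx : Qf K x ≠ 0)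
    (f : Ipts K → F) (hf : ∀ r, f (mv (Rm x) r) = f r)
    (h0 : ∀ r, mv (Rm x) r = r → f r = 0) : ∑ r, f r = 0 := by
  refine Finset.sum_involution (fun r _ => mv (Rm x) r) ?_ ?_ ?_ ?_
  · intro r _; rw [hf]; exact add_self_char_two _
  · intro r _ h h3; exact h (h0 r h3)
  · intros; exact Finset.mem_univ _
  · intro r _; exact mv_Rm_involutive hx r

/-- The pole of the line joining two points: the vector conjugate to both with respect to `bf`. -/
def cross (v w : Fin 3 → K) : Fin 3 → K :=
  ![2 * (v 0 * w 1 - v 1 * w 0), v 0 * w 2 - v 2 * w 0, 2 * (v 1 * w 2 - v 2 * w 1)]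

theorem bf_cross_left (v w : Fin 3 → K) : bf v (cross v w) = 0 := by
  simp [bf, cross]; ring

theorem bf_cross_right (v w : Fin 3 → K) : bf w (cross v w) = 0 := by
  simp [bf, cross]; ring

theorem Qf_cross (v w : Fin 3 → K) :
    Qf K (cross v w) = bf v w ^ 2 - 4 * (Qf K v * Qf K w) := by
  simp [bf, cross, Qf]; ring

theorem Qf_nv (p : Ipts K) : Qf K (nv p) = nv p 1 ^ 2 - nv p 2 := by
  rw [Qf, nv_zero]; ring

theorem bf_nv (p r : Ipts K) :
    bf (nv p) (nv r) = (nv p 1 - nv r 1) ^ 2 - Qf K (nv p) - Qf K (nv r) := by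
  rw [Qf_nv, Qf_nv, bf, nv_zero, nv_zero]; ring

theorem nv_ext {p r : Ipts K} (h : nv p 1 = nv r 1) (h' : nv p 2 = nv r 2) : p = r := by
  apply nv_inj
  ext i
  fin_cases i
  · simp [nv_zero]
  · exact h
  · exact h'

theorem Qf_nv_ne (p : Ipts K) : Qf K (nv p) ≠ 0 := by
  intro h; apply nv_internal p; rw [h]; exact IsSquare.zero

theorem Qf_cross_ne {p r : Ipts K} (h : p ≠ r) : Qf K (cross (nv p) (nv r)) ≠ 0 := by
  intro h0
  rw [Qf_cross] at h0
  obtain ⟨t, ht⟩ := isSquare_mul_of_not (nv_internal p) (nv_internal r)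
  have hm := Qf_nv_ne p
  have key : ∀ t : K, Qf K (nv p) * Qf K (nv r) = t * t → bf (nv p) (nv r) = 2 * t → False := by
    intro t ht hb
    rw [bf_nv] at hb
    have h3 : Qf K (nv p) * (nv p 1 - nv r 1) ^ 2 = (Qf K (nv p) + t) ^ 2 := by
      linear_combination Qf K (nv p) * hb + ht
    by_cases hs : nv p 1 - nv r 1 = 0
    · rw [hs] at h3
      have h4 : Qf K (nv p) + t = 0 := by
        have : (Qf K (nv p) + t) ^ 2 = 0 := by rw [← h3]; ring
        exact pow_eq_zero_iff two_ne_zero |>.1 this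
      have h5 : Qf K (nv r) = Qf K (nv p) := by
        apply mul_left_cancel₀ hm
        linear_combination ht + (t - Qf K (nv p)) * h4
      apply h
      apply nv_ext (sub_eq_zero.1 hs)
      rw [Qf_nv, Qf_nv] at h5
      linear_combination h5 + (nv p 1 + nv r 1) * hs
    · apply nv_internal p
      rw [← isSquare_sq_mul hs, mul_comm, h3]
      exact ⟨_, pow_two _⟩
  have h5 : (bf (nv p) (nv r) - 2 * t) * (bf (nv p) (nv r) + 2 * t) = 0 := by
    rw [ht] at h0
    linear_combination h0
  rcases mul_eq_zero.1 h5 with h6 | h6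
  · exact key t ht (sub_eq_zero.1 h6)
  · exact key (-t) (by rw [ht]; ring) (by linear_combination h6)

/-- When `v` and `u` are conjugate to `x`, `Q x` times the discriminant of `v, u` is the
square of the determinant with rows `x, v, u`. -/
theorem sq_key {x v u : Fin 3 → K} (hv : bf v x = 0) (hu : bf u x = 0) :
    IsSquare (Qf K x * (bf v u ^ 2 - 4 * (Qf K v * Qf K u))) := by
  refine ⟨x 0 * (v 1 * u 2 - v 2 * u 1) - x 1 * (v 0 * u 2 - v 2 * u 0) +
    x 2 * (v 0 * u 1 - v 1 * u 0), ?_⟩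
  have hid : Qf K x * (bf v u ^ 2 - 4 * (Qf K v * Qf K u)) -
    (x 0 * (v 1 * u 2 - v 2 * u 1) - x 1 * (v 0 * u 2 - v 2 * u 0) +
    x 2 * (v 0 * u 1 - v 1 * u 0)) * (x 0 * (v 1 * u 2 - v 2 * u 1) -
      x 1 * (v 0 * u 2 - v 2 * u 0) + x 2 * (v 0 * u 1 - v 1 * u 0)) =
    - bf v x * (bf v x * Qf K u + bf v u * bf u x) - bf u x * bf u x * Qf K v := by
    unfold bf Qf; ring
  rw [hv, hu] at hid
  linear_combination hid

/-- `r` is conjugate to two distinct points iff it is the pole of their join. -/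
theorem perp_both_iff {p p' : Ipts K} (h : p ≠ p') (r : Ipts K) :
    (bf (nv p) (nv r) = 0 ∧ bf (nv r) (nv p') = 0) ↔
      ∃ c : K, cross (nv p) (nv p') = c • nv r := by
  constructor
  · rintro ⟨ha, hb⟩
    refine ⟨2 * (nv p' 1 - nv p 1), ?_⟩
    simp only [bf, nv_zero] at ha hb
    ext i
    fin_cases i
    · simp [cross, nv_zero]
    · simp [cross, nv_zero]; linear_combination hb - ha
    · simp [cross, nv_zero]
      linear_combination 2 * (nv p 1 * hb - nv p' 1 * ha)
  · rintro ⟨c, hc⟩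
    have hc0 : c ≠ 0 := by
      rintro rfl
      apply Qf_cross_ne h
      rw [hc, Qf_smul]; ring
    have ha := bf_cross_left (nv p) (nv p')
    have hb := bf_cross_right (nv p) (nv p')
    rw [hc] at ha hb
    have h3 : ∀ v, bf v (c • nv r) = c * bf v (nv r) := by
      intro v
      have := bf_smul 1 c v (nv r)
      rwa [one_smul, one_mul] at this
    rw [h3] at ha hb
    refine ⟨(mul_eq_zero.1 ha).resolve_left hc0, ?_⟩
    rw [bf_comm]
    exact (mul_eq_zero.1 hb).resolve_left hc0

variable {F : Type} [Field F] [CharP F 2]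

/-- The incidence matrix of the conjugacy relation on internal points. -/
def inc (F : Type) [Field F] (p r : Ipts K) : F := if bf (nv p) (nv r) = 0 then 1 else 0

theorem inc_comm (p r : Ipts K) : inc F p r = inc F r p := by
  unfold inc; rw [bf_comm]

theorem inc_mv {a b c e : K} (h : a * e - b * c ≠ 0) (p r : Ipts K) :
    inc F (mv (Mg a b c e) p) (mv (Mg a b c e) r) = inc F p r := by
  unfold inc; rw [bf_mv h]

/-- The polar line of an internal point carries an odd number, `(q+1)/2`, of internal points. -/
theorem inc_sq_self (h1 : Fintype.card K % 4 = 1) (p : Ipts K) :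
    ∑ r, inc F p r * inc F r p = 1 := by
  have h2 : (2 : K) ≠ 0 := two_ne_zero_of_card h1
  have h3 : ∀ r, inc F p r * inc F r p = inc F p r := by
    intro r; rw [inc_comm r p]; unfold inc; split_ifs <;> simp
  simp_rw [h3]
  -- the reflection with centre `w` on the polar of `p` has one fixed internal point there
  set w : Fin 3 → K := ![0, 1, 2 * nv p 1] with hw
  have hQw : Qf K w = 1 := by simp [hw, Qf]
  have hQw0 : Qf K w ≠ 0 := by rw [hQw]; exact one_ne_zero
  have hpw : bf (nv p) w = 0 := by simp [hw, bf, nv_zero]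
  set u : Fin 3 → K := ![1, nv p 1, 2 * nv p 1 ^ 2 - nv p 2] with hu
  have hQu : Qf K u = - Qf K (nv p) := by rw [Qf_nv]; simp [hu, Qf]; ring
  have hui : ¬ IsSquare (Qf K u) := by
    rw [hQu, isSquare_neg_iff h1]; exact nv_internal p
  have hnv : nv (mkI u hui) = u := by rw [nv_mkI]; simp [hu]
  have hfix : ∀ r, mv (Rm w) r = r → r = mkI u hui ∨ inc F p r = 0 := by
    intro r hr
    rcases mv_Rm_fixed hQw0 hr with h | ⟨c, hc⟩
    · by_cases hb : bf (nv p) (nv r) = 0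
      · left
        have h4 : nv r 1 = nv p 1 := by
          simp [hw, bf, nv_zero] at h
          have : (2 : K) * (nv r 1 - nv p 1) = 0 := by linear_combination -h
          exact sub_eq_zero.1 ((mul_eq_zero.1 this).resolve_left h2)
        apply nv_ext
        · rw [hnv, h4]; simp [hu]
        · rw [hnv]; simp [hu]
          simp only [bf, nv_zero] at hb
          linear_combination hb + 2 * nv p 1 * h4
      · right; simp [inc, hb]
    · exfalso
      have := congrFun hc 0
      simp [nv_zero, hw] at this
  have h5 : ∑ r, (inc F p r - if r = mkI u hui then 1 else 0) = 0 := by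
    have hmu : mv (Rm w) (mkI u hui) = mkI u hui := by
      apply mv_Rm_of_perp hQw0
      rw [hnv]; simp [hu, hw, bf]
    apply sum_refl hQw0
    · intro r
      have h6 : inc F p (mv (Rm w) r) = inc F p r := by
        have := inc_mv (F := F) (Rm_det_ne hQw0) p r
        rw [← Rm, mv_Rm_of_perp hQw0 hpw] at this
        exact this
      have h7 : mv (Rm w) r = mkI u hui ↔ r = mkI u hui := by
        constructor
        · intro h
          rw [← mv_Rm_involutive hQw0 r, h, hmu]
        · rintro rfl; exact hmu
      rw [h6]; simp only [h7]
    · intro r hr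
      have hinc : inc F p (mkI u hui) = 1 := by
        unfold inc
        rw [if_pos]
        rw [hnv]; simp [hu, bf, nv_zero]; ring
      rcases hfix r hr with rfl | h
      · rw [hinc]; simp
      · rw [h, if_neg]
        · simp
        · rintro rfl; rw [hinc] at h; exact one_ne_zero h
  rw [Finset.sum_sub_distrib, Finset.sum_ite_eq', if_pos (Finset.mem_univ _)] at h5
  exact sub_eq_zero.1 h5

/-- The indicator of the pairs of distinct internal points whose join is a passant; the tested
quantity is `Q` of the pole of the join, and it is zero on the diagonal. -/
def pas (F : Type) [Field F] (p r : Ipts K) : F :=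
  if IsSquare (bf (nv p) (nv r) ^ 2 - 4 * (Qf K (nv p) * Qf K (nv r))) then 0 else 1

/-- The pole of the join is the only point conjugate to both of two distinct points, and it is internal
exactly when the join is a passant. -/
theorem inc_sq (h1 : Fintype.card K % 4 = 1) (p p' : Ipts K) :
    ∑ r, inc F p r * inc F r p' = (if p = p' then 1 else 0) + pas F p p' := by
  by_cases h : p = p'
  · subst h
    rw [inc_sq_self h1, if_pos rfl, pas, if_pos, add_zero]
    refine ⟨0, ?_⟩
    unfold bf Qf; ring
  rw [if_neg h, zero_add]
  have h3 : ∀ r, inc F p r * inc F r p' =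
      if ∃ c : K, cross (nv p) (nv p') = c • nv r then 1 else 0 := by
    intro r
    simp only [← perp_both_iff h r]
    unfold inc
    split_ifs <;> simp_all
  simp_rw [h3]
  unfold pas
  rw [← Qf_cross]
  split_ifs with hs
  · apply Finset.sum_eq_zero
    intro r _
    rw [if_neg]
    rintro ⟨c, hc⟩
    have hc0 : c ≠ 0 := by
      rintro rfl
      apply Qf_cross_ne h
      rw [hc, Qf_smul]; ring
    rw [hc, Qf_smul, isSquare_sq_mul hc0] at hs
    exact nv_internal r hs
  · have h4 : ∀ r, (∃ c : K, cross (nv p) (nv p') = c • nv r) ↔ mkI _ hs = r := fun r =>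
      mkI_eq_iff.symm
    simp_rw [h4]
    rw [Finset.sum_ite_eq, if_pos (Finset.mem_univ _)]

variable {d : K} [hd : Fact (∀ r : K, r ^ 2 ≠ d + 0 * r)] {χ : MulChar (QL d) F}

/-- The matrix on internal points attached to the character `χ`: its entry at `p, r` is the sum of
`χ` over the two roots of `X² - bf(p,r) X + Q(p) Q(r)` when the join of `p` and `r` is a passant, and
`0` otherwise. -/
def Pm (χ : MulChar (QL d) F) (p r : Ipts K) : F :=
  kf χ (bf (nv p) (nv r)) (Qf K (nv p) * Qf K (nv r))

theorem Pm_comm (p r : Ipts K) : Pm χ p r = Pm χ r p := by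
  unfold Pm; rw [bf_comm, mul_comm]

theorem Pm_mv (hχ : GoodChar χ) {a b c e : K} (h : a * e - b * c ≠ 0) (p r : Ipts K) :
    Pm χ (mv (Mg a b c e) p) (mv (Mg a b c e) r) = Pm χ p r := by
  obtain ⟨t, ht0, ht⟩ := mv_spec h p
  obtain ⟨t', ht0', ht'⟩ := mv_spec h r
  have hb := bf_vecMul a b c e (nv p) (nv r)
  have hq := Qf_vecMul a b c e (nv p)
  have hq' := Qf_vecMul a b c e (nv r)
  rw [ht, ht', bf_smul] at hb
  rw [ht, Qf_smul] at hq
  rw [ht', Qf_smul] at hq'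
  unfold Pm
  rw [← kf_scale hχ (l := t * t' / (a * e - b * c) ^ 2)
    (div_ne_zero (mul_ne_zero ht0 ht0') (pow_ne_zero 2 h))]
  congr 1
  · rw [div_mul_eq_mul_div, hb]; field_simp
  · have : (t * t' / (a * e - b * c) ^ 2) ^ 2 * (Qf K (nv (mv (Mg a b c e) p)) *
        Qf K (nv (mv (Mg a b c e) r))) = ((a * e - b * c) ^ 2)⁻¹ ^ 2 *
        ((t ^ 2 * Qf K (nv (mv (Mg a b c e) p))) *
        (t' ^ 2 * Qf K (nv (mv (Mg a b c e) r)))) := by ring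
    rw [this, hq, hq']; field_simp

theorem Pm_eq_zero (h2 : (2 : K) ≠ 0) {p r : Ipts K}
    (h : IsSquare (bf (nv p) (nv r) ^ 2 - 4 * (Qf K (nv p) * Qf K (nv r)))) : Pm χ p r = 0 :=
  kf_eq_zero_of_isSquare h2 h

theorem isSquare_disc_of_perp (h1 : Fintype.card K % 4 = 1) {p r : Ipts K}
    (h : bf (nv p) (nv r) = 0) :
    IsSquare (bf (nv p) (nv r) ^ 2 - 4 * (Qf K (nv p) * Qf K (nv r))) := by
  obtain ⟨t, ht⟩ := isSquare_mul_of_not (nv_internal p) (nv_internal r)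
  obtain ⟨i, hi0, hi⟩ := exists_neg_one_sq (K := K) h1
  exact ⟨2 * i * t, by rw [h, ht]; linear_combination - 4 * t * t * hi⟩

/-- The conjugacy matrix annihilates each matrix `Pm χ`: in characteristic two the sum reduces to the
fixed points of the reflection centred at the pole of the line `p p'`, where the terms vanish. -/
theorem inc_Pm (h1 : Fintype.card K % 4 = 1) (hχ : GoodChar χ) (p p' : Ipts K) :
    ∑ r, inc F p r * Pm χ r p' = 0 := by
  have h2 : (2 : K) ≠ 0 := two_ne_zero_of_card h1
  by_cases h : p = p'
  · subst h
    apply Finset.sum_eq_zero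
    intro r _
    unfold inc
    split_ifs with hb
    · rw [Pm_eq_zero h2, mul_zero]
      apply isSquare_disc_of_perp h1
      rw [bf_comm, hb]
    · rw [zero_mul]
  have hx := Qf_cross_ne h
  set x := cross (nv p) (nv p') with hxd
  have hp : mv (Rm x) p = p := mv_Rm_of_perp hx (bf_cross_left _ _)
  have hp' : mv (Rm x) p' = p' := mv_Rm_of_perp hx (bf_cross_right _ _)
  apply sum_refl hx
  · intro r
    have ha := inc_mv (F := F) (Rm_det_ne hx) p r
    have hb := Pm_mv hχ (Rm_det_ne hx) r p'
    rw [← Rm, hp] at ha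
    rw [← Rm, hp'] at hb
    rw [ha, hb]
  · intro r hr
    by_cases hb : bf (nv p) (nv r) = 0
    · rw [Pm_eq_zero h2, mul_zero]
      rcases mv_Rm_fixed hx hr with h3 | ⟨c, hc⟩
      · have h4 := sq_key (bf_cross_left (nv p) (nv p')) h3
        rw [← hxd] at h4
        have h5 := isSquare_disc_of_perp h1 hb
        have h5' : bf (nv p) (nv r) ^ 2 - 4 * (Qf K (nv p) * Qf K (nv r)) ≠ 0 := by
          rw [hb]
          have h4 : (4 : K) ≠ 0 := by
            have : (4 : K) = 2 * 2 := by norm_num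
            rw [this]; exact mul_ne_zero h2 h2
          have := mul_ne_zero h4 (mul_ne_zero (Qf_nv_ne p) (Qf_nv_ne r))
          intro h6
          exact this (by linear_combination -h6)
        obtain ⟨t, ht⟩ := h5
        have ht0 : t ≠ 0 := by rintro rfl; apply h5'; rw [ht]; ring
        have h6 : IsSquare (Qf K x) := by
          rw [← isSquare_sq_mul ht0]
          rw [ht] at h4
          convert h4 using 1
          ring
        obtain ⟨y, hy⟩ := h6
        have hy0 : y ≠ 0 := by rintro rfl; apply hx; rw [hy]; ring
        have h7 := sq_key h3 (bf_cross_right (nv p) (nv p'))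
        rw [hy, ← pow_two, isSquare_sq_mul hy0] at h7
        exact h7
      · apply isSquare_disc_of_perp h1
        have := bf_cross_right (nv p) (nv p')
        rw [hc, bf_comm]
        have h8 := bf_smul 1 c (nv p') x
        rw [one_smul] at h8
        rw [h8, this, mul_zero]
    · simp [inc, hb]

end Incidence

/-! ### The weight bases and the decomposition of the kernel -/

section Basis

variable {K}
variable {d : K} [hd : Fact (∀ r : K, r ^ 2 ≠ d + 0 * r)]
variable {F : Type} [Field F] [CharP F 2] {χ : MulChar (QL d) F}
variable {θ : MulChar (QL d) F} {n : ℕ} {ψ : AddChar K F}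

/-- The vector on which the unipotent matrix with parameter `b` acts as `ψ (α b)`, in the module
attached to `χ`. An internal point is described by its middle coordinate `nv p 1` and by `Q (nv p)`. -/
def xv (χ : MulChar (QL d) F) (ψ : AddChar K F) (α : K) (p : Ipts K) : F :=
  ψ (α * nv p 1) * Kf χ ψ α (Qf K (nv p))

theorem sum_units {M : Type} [AddCommMonoid M] (f : K → M) (h0 : f 0 = 0) :
    ∑ α : K, f α = ∑ α : Kˣ, f α := by
  rw [← Finset.sum_filter_of_ne (p := fun α : K => α ≠ 0)]
  · symm
    refine Finset.sum_bij (fun (α : Kˣ) _ => (α : K)) ?_ ?_ ?_ ?_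
    · intro α _; simp
    · intro α _ β _ h; exact Units.ext h
    · intro α hα; exact ⟨Units.mk0 α (by simpa using hα), Finset.mem_univ _, rfl⟩
    · intros; rfl
  · rintro α _ h rfl; exact h h0

theorem xv_zero (hχ : GoodChar χ) : xv χ ψ 0 = 0 := by
  funext p; simp [xv, Kf_zero hχ]

/-- The matrix `Pm χ` is a sum of `q - 1` rank-one matrices, by the Fourier factorization of `kf`. -/
theorem Pm_eq_sum (h1 : Fintype.card K % 4 = 1) (hχ : GoodChar χ) (hψ : ψ.IsPrimitive)
    (p r : Ipts K) : Pm χ p r = ∑ α : Kˣ, xv χ ψ α p * xv χ ψ (-α : Kˣ) r := by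
  have h3 : ∑ α : Kˣ, xv χ ψ α p * xv χ ψ (-α : Kˣ) r =
      ∑ α : Kˣ, (fun α : K => xv χ ψ α p * xv χ ψ (-α) r) α := by
    apply Finset.sum_congr rfl; intro α _; simp
  rw [h3, ← sum_units (fun α : K => xv χ ψ α p * xv χ ψ (-α) r) (by simp [xv_zero hχ])]
  unfold Pm
  rw [bf_nv]
  have h4 := sum_Kf_mul_Kf (χ := χ) h1 hψ (m := Qf K (nv p)) (m' := Qf K (nv r))
    (nv r 1 - nv p 1) (nv_internal p)
  have h5 : (nv r 1 - nv p 1) ^ 2 = (nv p 1 - nv r 1) ^ 2 := by ring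
  rw [h5] at h4
  rw [← h4]
  apply Finset.sum_congr rfl
  intro α _
  unfold xv
  rw [Kf_neg hχ]
  have h6 : -(α * (nv r 1 - nv p 1)) = α * nv p 1 + -α * nv r 1 := by ring
  rw [h6, AddChar.map_add_eq_mul]
  ring

theorem pas_eq_sum (h1 : Fintype.card K % 4 = 1) (hθ : ThetaData θ n) (p r : Ipts K) :
    pas F p r = ∑ j : Fin n, Pm (θ ^ (j.1 + 1)) p r := by
  unfold pas Pm
  obtain ⟨t, ht⟩ := isSquare_mul_of_not (nv_internal p) (nv_internal r)
  rw [ht, ← pow_two, sum_kf h1 hθ]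

theorem xv_linearIndependent (h1 : Fintype.card K % 4 = 1) (hθ : ThetaData θ n)
    (hψ : ψ.IsPrimitive) :
    LinearIndependent F (fun i : Fin n × Kˣ => xv (θ ^ (i.1.1 + 1)) ψ (i.2 : K)) := by
  rw [Fintype.linearIndependent_iff]
  intro g hg
  set c : Fin n → K → F := fun j α => if h : α ≠ 0 then g (j, Units.mk0 α h) else 0 with hc
  have key := indep_coord h1 hθ hψ c ?_
  · rintro ⟨j, α⟩
    have := key j α α.ne_zero
    rw [hc] at this
    simpa using this
  · intro s m hm
    have hQ : Qf K ![1, s, s ^ 2 - m] = m := by simp [Qf]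
    have hi : ¬ IsSquare (Qf K ![1, s, s ^ 2 - m]) := by rwa [hQ]
    have h3 := congrFun hg (mkI _ hi)
    rw [Fintype.sum_prod_type] at h3
    simp only [Finset.sum_apply, Pi.smul_apply, smul_eq_mul, Pi.zero_apply] at h3
    rw [← h3]
    apply Finset.sum_congr rfl
    intro j _
    have hnv : nv (mkI _ hi) = ![1, s, s ^ 2 - m] := by rw [nv_mkI]; simp
    rw [sum_units _ (by simp [hc])]
    apply Finset.sum_congr rfl
    intro α _
    simp [hc, xv, hnv, hQ]

theorem indep_zero (h1 : Fintype.card K % 4 = 1) (hθ : ThetaData θ n) (hψ : ψ.IsPrimitive)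
    (c : Fin n → Kˣ → F)
    (h : ∀ p, ∑ j, ∑ α : Kˣ, c j α * xv (θ ^ (j.1 + 1)) ψ (α : K) p = 0) (j : Fin n) (α : Kˣ) :
    c j α = 0 := by
  have h3 : ∑ i : Fin n × Kˣ, c i.1 i.2 • xv (θ ^ (i.1.1 + 1)) ψ (i.2 : K) = 0 := by
    funext p
    rw [Fintype.sum_prod_type]
    simpa using h p
  have h4 := xv_linearIndependent h1 hθ hψ
  rw [Fintype.linearIndependent_iff] at h4
  exact h4 (fun i => c i.1 i.2) h3 (j, α)

theorem indep_zero_single (h1 : Fintype.card K % 4 = 1) (hθ : ThetaData θ n)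
    (hψ : ψ.IsPrimitive) (j : Fin n) (c : Kˣ → F)
    (h : ∀ p, ∑ α : Kˣ, c α * xv (θ ^ (j.1 + 1)) ψ (α : K) p = 0) (α : Kˣ) :
    c α = 0 := by
  have h3 := indep_zero h1 hθ hψ (fun j' α => if j' = j then c α else 0) ?_ j α
  · simpa using h3
  · intro p
    rw [Finset.sum_eq_single j]
    · simpa using h p
    · intro j' _ hj; simp [hj]
    · simp

theorem indep_eq (h1 : Fintype.card K % 4 = 1) (hθ : ThetaData θ n) (hψ : ψ.IsPrimitive)
    (c c' : Fin n → Kˣ → F)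
    (h : ∀ p, ∑ j, ∑ α : Kˣ, c j α * xv (θ ^ (j.1 + 1)) ψ (α : K) p =
      ∑ j, ∑ α : Kˣ, c' j α * xv (θ ^ (j.1 + 1)) ψ (α : K) p) (j : Fin n) (α : Kˣ) :
    c j α = c' j α := by
  have := indep_zero h1 hθ hψ (fun j α => c j α - c' j α) ?_ j α
  · exact sub_eq_zero.1 this
  · intro p
    simp only [sub_mul, Finset.sum_sub_distrib]
    exact sub_eq_zero.2 (h p)

/-- The passant matrix is idempotent: it equals `1 + A²` for the conjugacy matrix `A`, and `A` annihilates
it. -/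
theorem pas_pas (h1 : Fintype.card K % 4 = 1) (hθ : ThetaData θ n) (p p' : Ipts K) :
    ∑ r, pas F p r * pas F r p' = pas F p p' := by
  have hinc : ∀ s, ∑ r, inc F s r * pas F r p' = 0 := by
    intro s
    simp_rw [pas_eq_sum h1 hθ, Finset.mul_sum]
    rw [Finset.sum_comm]
    exact Finset.sum_eq_zero fun j _ => inc_Pm h1 (hθ.good j) s p'
  have hpas : ∀ r, pas F p r = (if p = r then 1 else 0) + ∑ s, inc F p s * inc F s r := by
    intro r
    rw [inc_sq h1, ← add_assoc, add_self_char_two, zero_add]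
  have h3 : ∑ r, (∑ s, inc F p s * inc F s r) * pas F r p' = 0 := by
    simp_rw [Finset.sum_mul]
    rw [Finset.sum_comm]
    apply Finset.sum_eq_zero
    intro s _
    simp_rw [mul_assoc]
    rw [← Finset.mul_sum, hinc, mul_zero]
  calc ∑ r, pas F p r * pas F r p'
      = ∑ r, ((if p = r then 1 else 0) + ∑ s, inc F p s * inc F s r) * pas F r p' := by
        simp_rw [← hpas]
    _ = pas F p p' := by
        simp_rw [add_mul]
        rw [Finset.sum_add_distrib, h3, add_zero]
        simp

theorem sum_neg_units {M : Type} [AddCommMonoid M] (f : Kˣ → M) :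
    ∑ α : Kˣ, f (-α) = ∑ α : Kˣ, f α :=
  Fintype.sum_equiv (Equiv.neg Kˣ) _ _ fun _ => rfl

/-- The families `xv (-α)` and `xv β` are dual for the standard bilinear form. This is read off from
the idempotency of `pas = ∑ xv α ⊗ xv (-α)` together with the independence of the `xv`. -/
theorem xv_orth (h1 : Fintype.card K % 4 = 1) (hθ : ThetaData θ n) (hψ : ψ.IsPrimitive)
    (j j' : Fin n) (α β : Kˣ) :
    ∑ p, xv (θ ^ (j.1 + 1)) ψ (-α : Kˣ) p * xv (θ ^ (j'.1 + 1)) ψ (β : K) p =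
      if j = j' ∧ α = β then 1 else 0 := by
  set X : Fin n → Kˣ → Ipts K → F := fun j α => xv (θ ^ (j.1 + 1)) ψ (α : K) with hX
  have hP : ∀ p r, pas F p r = ∑ j, ∑ α, X j α p * X j (-α) r := by
    intro p r
    rw [pas_eq_sum h1 hθ]
    exact Finset.sum_congr rfl fun j _ => Pm_eq_sum h1 (hθ.good j) hψ p r
  set G : Fin n → Kˣ → Fin n → Kˣ → F := fun j α j' β => ∑ r, X j (-α) r * X j' β r with hG
  change G j α j' β = _
  have step1 : ∀ p' j α, ∑ j', ∑ β, G j α j' β * X j' (-β) p' = X j (-α) p' := by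
    intro p'
    apply indep_eq h1 hθ hψ (fun j α => ∑ j', ∑ β, G j α j' β * X j' (-β) p')
      (fun j α => X j (-α) p')
    intro p
    have h3 := pas_pas (F := F) h1 hθ p p'
    rw [hP p p'] at h3
    change ∑ j, ∑ α, (∑ j', ∑ β, G j α j' β * X j' (-β) p') * X j α p =
      ∑ j, ∑ α, X j (-α) p' * X j α p
    have h4 : ∑ j, ∑ α, X j (-α) p' * X j α p = ∑ j, ∑ α, X j α p * X j (-α) p' := by
      simp_rw [mul_comm]
    rw [h4, ← h3]
    have h8 : ∑ r, pas F p r * pas F r p' =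
        ∑ j, ∑ α, ∑ r, X j α p * X j (-α) r * pas F r p' := by
      simp_rw [hP p, Finset.sum_mul]
      rw [Finset.sum_comm]
      exact Finset.sum_congr rfl fun j _ => Finset.sum_comm
    rw [h8]
    refine Finset.sum_congr rfl fun j _ => Finset.sum_congr rfl fun α _ => ?_
    have h9 : ∑ r, X j α p * X j (-α) r * pas F r p' =
        ∑ j', ∑ β, ∑ r, X j α p * X j (-α) r * (X j' β r * X j' (-β) p') := by
      simp_rw [hP _ p', Finset.mul_sum]
      rw [Finset.sum_comm]
      exact Finset.sum_congr rfl fun j _ => Finset.sum_comm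
    rw [h9, Finset.sum_mul]
    refine Finset.sum_congr rfl fun j' _ => ?_
    rw [Finset.sum_mul]
    refine Finset.sum_congr rfl fun β _ => ?_
    rw [hG, Finset.sum_mul, Finset.sum_mul]
    exact Finset.sum_congr rfl fun r _ => by ring
  have h5 := indep_eq h1 hθ hψ (fun j' β => G j α j' (-β))
    (fun j' β => if j' = j ∧ β = -α then 1 else 0) ?_ j' (-β)
  · simp only [neg_neg, neg_inj] at h5
    rw [h5]
    simp only [eq_comm]
  · intro p
    have h6 := step1 p j α
    have h7 : ∀ j', ∑ β, G j α j' β * X j' (-β) p = ∑ β, G j α j' (-β) * X j' β p := by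
      intro j'
      rw [← sum_neg_units]
      simp
    simp_rw [h7] at h6
    change ∑ j', ∑ β, G j α j' (-β) * X j' β p = _
    rw [h6, Finset.sum_eq_single j]
    · rw [Finset.sum_eq_single (-α)]
      · simp [hX]
      · intro β _ hb; simp [hb]
      · simp
    · intro j' _ hj; simp [hj]
    · simp

/-- The submodule attached to `χ`, spanned by the weight vectors `xv χ ψ α` with `α ≠ 0`. -/
def Mj (χ : MulChar (QL d) F) (ψ : AddChar K F) : Submodule F (Ipts K → F) :=
  Submodule.span F (Set.range fun α : Kˣ => xv χ ψ (α : K))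

theorem xv_mem (α : Kˣ) : xv χ ψ (α : K) ∈ Mj χ ψ := Submodule.subset_span ⟨α, rfl⟩

/-- The coordinate functional dual to `xv χ ψ α`. -/
def co (χ : MulChar (QL d) F) (ψ : AddChar K F) (α : Kˣ) (x : Ipts K → F) : F :=
  ∑ p, xv χ ψ (-α : Kˣ) p * x p

theorem sum_Pm_mul (h1 : Fintype.card K % 4 = 1) (hχ : GoodChar χ) (hψ : ψ.IsPrimitive)
    (x : Ipts K → F) (p : Ipts K) :
    ∑ r, Pm χ p r * x r = ∑ α : Kˣ, co χ ψ α x * xv χ ψ (α : K) p := by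
  simp_rw [Pm_eq_sum h1 hχ hψ, co, Finset.sum_mul]
  rw [Finset.sum_comm]
  refine Finset.sum_congr rfl fun α _ => Finset.sum_congr rfl fun r _ => by ring

theorem co_xv (h1 : Fintype.card K % 4 = 1) (hθ : ThetaData θ n) (hψ : ψ.IsPrimitive)
    (j j' : Fin n) (α β : Kˣ) :
    co (θ ^ (j.1 + 1)) ψ α (xv (θ ^ (j'.1 + 1)) ψ (β : K)) =
      if j = j' ∧ α = β then 1 else 0 :=
  xv_orth h1 hθ hψ j j' α β

theorem co_sum {ι : Type} (s : Finset ι) (α : Kˣ) (c : ι → F) (y : ι → Ipts K → F) :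
    co χ ψ α (∑ i ∈ s, c i • y i) = ∑ i ∈ s, c i * co χ ψ α (y i) := by
  unfold co
  simp only [Finset.sum_apply, Pi.smul_apply, smul_eq_mul, Finset.mul_sum]
  rw [Finset.sum_comm]
  refine Finset.sum_congr rfl fun α _ => Finset.sum_congr rfl fun r _ => by ring

theorem eq_sum_co (h1 : Fintype.card K % 4 = 1) (hθ : ThetaData θ n) (hψ : ψ.IsPrimitive)
    (j : Fin n) {x : Ipts K → F} (hx : x ∈ Mj (θ ^ (j.1 + 1)) ψ) :
    x = ∑ α : Kˣ, co (θ ^ (j.1 + 1)) ψ α x • xv (θ ^ (j.1 + 1)) ψ (α : K) := by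
  obtain ⟨c, rfl⟩ := (Submodule.mem_span_range_iff_exists_fun F).1 hx
  apply Finset.sum_congr rfl
  intro α _
  congr 1
  rw [co_sum]
  simp_rw [co_xv h1 hθ hψ]
  simp

/-- `Mj` is the set of fixed vectors of the projection `Pm`, which commutes with the group. -/
theorem mem_Mj_iff (h1 : Fintype.card K % 4 = 1) (hθ : ThetaData θ n) (hψ : ψ.IsPrimitive)
    (j : Fin n) {x : Ipts K → F} :
    x ∈ Mj (θ ^ (j.1 + 1)) ψ ↔ ∀ p, ∑ r, Pm (θ ^ (j.1 + 1)) p r * x r = x p := by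
  constructor
  · intro hx p
    rw [sum_Pm_mul h1 (hθ.good j) hψ]
    conv_rhs => rw [eq_sum_co h1 hθ hψ j hx]
    simp
  · intro h
    have : x = ∑ α : Kˣ, co (θ ^ (j.1 + 1)) ψ α x • xv (θ ^ (j.1 + 1)) ψ (α : K) := by
      funext p
      rw [← h p, sum_Pm_mul h1 (hθ.good j) hψ]
      simp
    rw [this]
    exact Submodule.sum_mem _ fun α _ => Submodule.smul_mem _ _ (xv_mem α)

theorem Mj_stable (h1 : Fintype.card K % 4 = 1) (hθ : ThetaData θ n) (hψ : ψ.IsPrimitive)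
    (j : Fin n) {x y : Ipts K → F} (hx : x ∈ Mj (θ ^ (j.1 + 1)) ψ) {a b c e : K}
    (h : a * e - b * c ≠ 0) (hy : ∀ p, y (mv (Mg a b c e) p) = x p) :
    y ∈ Mj (θ ^ (j.1 + 1)) ψ := by
  rw [mem_Mj_iff h1 hθ hψ] at hx ⊢
  intro p'
  obtain ⟨p, rfl⟩ := (mv_bijective h).2 p'
  rw [hy, ← hx p]
  symm
  refine Fintype.sum_equiv (Equiv.ofBijective _ (mv_bijective h)) _ _ ?_
  intro r
  simp only [Equiv.ofBijective_apply]
  rw [Pm_mv (hθ.good j) h, hy]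

theorem finrank_Mj (h1 : Fintype.card K % 4 = 1) (hθ : ThetaData θ n) (hψ : ψ.IsPrimitive)
    (j : Fin n) : Module.finrank F (Mj (θ ^ (j.1 + 1)) ψ) = Fintype.card K - 1 := by
  have h3 := (xv_linearIndependent h1 hθ hψ).comp (fun α : Kˣ => (j, α))
    (fun α β h => (Prod.ext_iff.1 h).2)
  rw [Mj, ← Fintype.card_units (α := K)]
  exact finrank_span_eq_card h3

theorem iSupIndep_Mj (h1 : Fintype.card K % 4 = 1) (hθ : ThetaData θ n) (hψ : ψ.IsPrimitive) :
    iSupIndep fun j : Fin n => Mj (θ ^ (j.1 + 1)) ψ := by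
  intro j
  have h3 := (xv_linearIndependent h1 hθ hψ).disjoint_span_image
    (s := {i | i.1 = j}) (t := {i | i.1 ≠ j})
    (Set.disjoint_left.2 fun i h h' => h' h)
  refine h3.mono ?_ ?_
  · refine Submodule.span_mono ?_
    rintro _ ⟨α, rfl⟩
    exact ⟨(j, α), rfl, rfl⟩
  · refine iSup₂_le fun j' hj => Submodule.span_mono ?_
    rintro _ ⟨α, rfl⟩
    exact ⟨(j', α), hj, rfl⟩

theorem sum_xv_inc (h1 : Fintype.card K % 4 = 1) (hθ : ThetaData θ n) (hψ : ψ.IsPrimitive)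
    (j : Fin n) (α : Kˣ) (p : Ipts K) :
    ∑ r, xv (θ ^ (j.1 + 1)) ψ (α : K) r * inc F r p = 0 := by
  have := indep_zero_single h1 hθ hψ j
    (fun β => ∑ r, xv (θ ^ (j.1 + 1)) ψ (-β : Kˣ) r * inc F r p) ?_ (-α)
  · simpa using this
  · intro p'
    rw [← inc_Pm h1 (hθ.good j) p p']
    simp_rw [Pm_comm _ p', Pm_eq_sum h1 (hθ.good j) hψ, Finset.mul_sum, Finset.sum_mul]
    rw [Finset.sum_comm]
    refine Finset.sum_congr rfl fun r _ => Finset.sum_congr rfl fun β _ => ?_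
    rw [inc_comm r p]; ring

/-- The kernel of the conjugacy matrix `A` is the image of the idempotent `1 + A² = ∑ Pm (θ ^ j)`. -/
theorem mem_iSup_iff (h1 : Fintype.card K % 4 = 1) (hθ : ThetaData θ n) (hψ : ψ.IsPrimitive)
    (x : Ipts K → F) :
    x ∈ (⨆ j : Fin n, Mj (θ ^ (j.1 + 1)) ψ) ↔ ∀ p, ∑ r, x r * inc F r p = 0 := by
  constructor
  · intro hx p
    induction hx using Submodule.iSup_induction' with
    | mem j x hx =>
      obtain ⟨c, rfl⟩ := (Submodule.mem_span_range_iff_exists_fun F).1 hx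
      simp only [Finset.sum_apply, Pi.smul_apply, smul_eq_mul, Finset.sum_mul]
      rw [Finset.sum_comm]
      apply Finset.sum_eq_zero
      intro α _
      simp_rw [mul_assoc]
      rw [← Finset.mul_sum, sum_xv_inc h1 hθ hψ, mul_zero]
    | zero => simp
    | add x y _ _ hx hy => simp only [Pi.add_apply, add_mul, Finset.sum_add_distrib, hx, hy, add_zero]
  · intro h
    have h3 : x = ∑ j : Fin n, ∑ α : Kˣ,
        (∑ r, x r * xv (θ ^ (j.1 + 1)) ψ (-α : Kˣ) r) • xv (θ ^ (j.1 + 1)) ψ (α : K) := by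
      funext p
      have h4 : ∑ r, x r * ((if r = p then 1 else 0) + pas F r p) = 0 := by
        simp_rw [← inc_sq h1, Finset.mul_sum, ← mul_assoc]
        rw [Finset.sum_comm]
        apply Finset.sum_eq_zero
        intro s _
        rw [← Finset.sum_mul, h s, zero_mul]
      simp_rw [mul_add] at h4
      rw [Finset.sum_add_distrib] at h4
      simp only [mul_ite, mul_one, mul_zero, Finset.sum_ite_eq', Finset.mem_univ, if_true] at h4
      rw [CharTwo.add_eq_zero.1 h4]
      simp only [Finset.sum_apply, Pi.smul_apply, smul_eq_mul, Finset.sum_mul]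
      simp_rw [pas_eq_sum h1 hθ, Pm_comm _ p, Finset.mul_sum]
      rw [Finset.sum_comm]
      apply Finset.sum_congr rfl; intro j _
      rw [Finset.sum_comm]
      apply Finset.sum_congr rfl; intro r _
      rw [Pm_eq_sum h1 (hθ.good j) hψ, Finset.mul_sum]
      refine Finset.sum_congr rfl fun α _ => ?_
      ring
    rw [h3]
    refine Submodule.sum_mem _ fun j _ => Submodule.sum_mem _ fun α _ =>
      Submodule.smul_mem _ _ (Submodule.mem_iSup_of_mem j (xv_mem α))

end Basis

/-! ### Invariant kernels and their transposes -/

section Swap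

variable {K}

theorem nv_mv_diag {a e : K} (ha : a ≠ 0) (he : e ≠ 0) (p : Ipts K) :
    nv (mv (Mg a 0 0 e) p) = ![1, e / a * nv p 1, (e / a) ^ 2 * nv p 2] := by
  have h : a * e - 0 * 0 ≠ 0 := by simp [ha, he]
  obtain ⟨t, ht0, ht⟩ := mv_spec h p
  rw [vecMul_Mg] at ht
  have e0 := congrFun ht 0
  have e1 := congrFun ht 1
  have e2 := congrFun ht 2
  simp [nv_zero] at e0 e1 e2
  ext i
  fin_cases i
  · simp [nv_zero]
  · simp
    apply mul_left_cancel₀ ht0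
    rw [← e1, ← e0]; field_simp
  · simp
    apply mul_left_cancel₀ ht0
    rw [← e2, ← e0]; field_simp

theorem nv_mv_unip (b : K) (p : Ipts K) :
    nv (mv (Mg 1 b 0 1) p) = ![1, nv p 1 + b, nv p 2 + 2 * b * nv p 1 + b ^ 2] := by
  have h : (1 : K) * 1 - b * 0 ≠ 0 := by simp
  obtain ⟨t, ht0, ht⟩ := mv_spec h p
  rw [vecMul_Mg] at ht
  have e0 := congrFun ht 0
  have e1 := congrFun ht 1
  have e2 := congrFun ht 2
  simp [nv_zero] at e0 e1 e2
  rw [← e0, one_mul] at e1 e2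
  ext i
  fin_cases i
  · simp [nv_zero]
  · simp; rw [← e1]; ring
  · simp; rw [← e2]; ring

theorem mv_one (p : Ipts K) : mv (Mg 1 0 0 1) p = p := by
  apply nv_ext <;> rw [nv_mv_diag one_ne_zero one_ne_zero] <;> simp

theorem mv_inv_mv {a b c e : K} (h : a * e - b * c = 1) (p : Ipts K) :
    mv (Mg e (-b) (-c) a) (mv (Mg a b c e) p) = p := by
  rw [mv_mv (by rw [h]; exact one_ne_zero)]
  · have e1 : a * e + b * -c = 1 := by linear_combination h
    have e2 : a * -b + b * a = 0 := by ring
    have e3 : c * e + e * -c = 0 := by ring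
    have e4 : c * -b + e * a = 1 := by linear_combination h
    rw [e1, e2, e3, e4, mv_one]
  · have : e * a - -b * -c = 1 := by linear_combination h
    rw [this]; exact one_ne_zero

variable {d : K} [hd : Fact (∀ r : K, r ^ 2 ≠ d + 0 * r)]
variable {F : Type} [Field F] [CharP F 2] {χ χ' : MulChar (QL d) F}
variable {θ : MulChar (QL d) F} {n : ℕ} {ψ : AddChar K F}

theorem xv_diag (hχ : GoodChar χ) {a e : K} (ha : a ≠ 0) (he : e ≠ 0) (α : K) (p : Ipts K) :
    xv χ ψ α (mv (Mg a 0 0 e) p) = xv χ ψ (e / a * α) p := by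
  unfold xv
  have hq : Qf K (nv (mv (Mg a 0 0 e) p)) = (e / a) ^ 2 * Qf K (nv p) := by
    rw [Qf_nv, Qf_nv, nv_mv_diag ha he]; simp; ring
  rw [hq, Kf_scale hχ ψ (div_ne_zero he ha), nv_mv_diag ha he]
  congr 2
  simp; ring

theorem xv_unip (b α : K) (p : Ipts K) :
    xv χ ψ α (mv (Mg 1 b 0 1) p) = ψ (α * b) * xv χ ψ α p := by
  unfold xv
  have hq : Qf K (nv (mv (Mg 1 b 0 1) p)) = Qf K (nv p) := by
    rw [Qf_nv, Qf_nv, nv_mv_unip]; simp; ring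
  rw [hq, nv_mv_unip]
  simp [mul_add, AddChar.map_add_eq_mul]; ring

/-- A kernel diagonal with respect to the bases `xv χ'` and `xv χ`. -/
def Ek (χ' χ : MulChar (QL d) F) (ψ : AddChar K F) (c : Kˣ → F) (p r : Ipts K) : F :=
  ∑ α : Kˣ, c α * (xv χ' ψ (α : K) p * xv χ ψ (-α : Kˣ) r)

/-- Invariance of a kernel under the unimodular group. -/
def HInv (E : Ipts K → Ipts K → F) : Prop :=
  ∀ a b c e : K, a * e - b * c = 1 → ∀ p p', E (mv (Mg a b c e) p) (mv (Mg a b c e) p') = E p p'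

theorem Ek_diag (hχ : GoodChar χ) (hχ' : GoodChar χ') (c : Kˣ → F) (D : Kˣ) (p p' : Ipts K) :
    Ek χ' χ ψ c (mv (Mg 1 0 0 (D : K)) p) (mv (Mg 1 0 0 (D : K)) p') =
      Ek χ' χ ψ (fun α => c (D⁻¹ * α)) p p' := by
  unfold Ek
  refine Fintype.sum_equiv (Equiv.mulLeft D) _ _ ?_
  intro α
  simp [xv_diag hχ one_ne_zero D.ne_zero, xv_diag hχ' one_ne_zero D.ne_zero]

/-- An invariant kernel vanishes at distinct points joined by a secant. Writing the column of the
kernel as its own image under `Pm` gives a sum that is invariant under a reflection of determinant `1`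
fixing both points, and the terms at the fixed points of this reflection are zero. -/
theorem Ek_secant (h1 : Fintype.card K % 4 = 1) (hθ : ThetaData θ n) (hψ : ψ.IsPrimitive)
    (j' : Fin n) (c : Kˣ → F) (hE : HInv (Ek (θ ^ (j'.1 + 1)) χ ψ c)) {p p' : Ipts K}
    (hne : p ≠ p')
    (hsq : IsSquare (bf (nv p) (nv p') ^ 2 - 4 * (Qf K (nv p) * Qf K (nv p')))) :
    Ek (θ ^ (j'.1 + 1)) χ ψ c p p' = 0 := by
  have h2 : (2 : K) ≠ 0 := two_ne_zero_of_card h1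
  have hx0 := Qf_cross_ne hne
  rw [← Qf_cross] at hsq
  obtain ⟨e, he⟩ := (isSquare_neg_iff h1).2 hsq
  have he0 : e ≠ 0 := by
    rintro rfl; apply hx0; linear_combination -he
  set x : Fin 3 → K := e⁻¹ • cross (nv p) (nv p') with hx
  have hQx : Qf K x = -1 := by
    have h3 : Qf K (cross (nv p) (nv p')) = -(e * e) := by linear_combination -he
    rw [hx, Qf_smul, h3]; field_simp
  have hQx0 : Qf K x ≠ 0 := by rw [hQx]; simp
  have hbl : bf (nv p) x = 0 := by
    have := bf_smul 1 e⁻¹ (nv p) (cross (nv p) (nv p'))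
    rw [one_smul, bf_cross_left, mul_zero] at this
    exact this
  have hbr : bf (nv p') x = 0 := by
    have := bf_smul 1 e⁻¹ (nv p') (cross (nv p) (nv p'))
    rw [one_smul, bf_cross_right, mul_zero] at this
    exact this
  have hmem : (fun r => Ek (θ ^ (j'.1 + 1)) χ ψ c r p') ∈ Mj (θ ^ (j'.1 + 1)) ψ := by
    have h3 : (fun r => Ek (θ ^ (j'.1 + 1)) χ ψ c r p') =
        ∑ α : Kˣ, (c α * xv χ ψ (-α : Kˣ) p') • xv (θ ^ (j'.1 + 1)) ψ (α : K) := by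
      funext r
      simp only [Ek, Finset.sum_apply, Pi.smul_apply, smul_eq_mul]
      exact Finset.sum_congr rfl fun α _ => by ring
    rw [h3]
    exact Submodule.sum_mem _ fun α _ => Submodule.smul_mem _ _ (xv_mem α)
  rw [mem_Mj_iff h1 hθ hψ] at hmem
  rw [← hmem p]
  have hdet : x 1 * -(x 1) - x 2 * -(x 0) = 1 := by rw [Rm_det, hQx, neg_neg]
  apply sum_refl hQx0
  · intro r
    have ha := Pm_mv (hθ.good j') (Rm_det_ne hQx0) p r
    have hb := hE _ _ _ _ hdet r p'
    rw [← Rm, mv_Rm_of_perp hQx0 hbl] at ha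
    rw [← Rm, mv_Rm_of_perp hQx0 hbr] at hb
    rw [ha, hb]
  · intro r hr
    rcases mv_Rm_fixed hQx0 hr with h3 | ⟨k, hk⟩
    · rw [Pm_eq_zero h2, zero_mul]
      have h4 := sq_key hbl h3
      rw [hQx, neg_one_mul, isSquare_neg_iff h1] at h4
      exact h4
    · exfalso
      apply nv_internal r
      rw [hk, Qf_smul, hQx, mul_neg_one, isSquare_neg_iff h1]
      exact ⟨k, pow_two k⟩

/-- A reflection with nonsquare determinant interchanging `p` and `p'` is the product of a diagonal
matrix of nonsquare determinant and an element of the unimodular group. -/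
theorem Ek_swap_aux (hχ : GoodChar χ) (hχ' : GoodChar χ')
    (c : Kˣ → F) (hc : ∀ a α : Kˣ, c (a ^ 2 * α) = c α) (hE : HInv (Ek χ' χ ψ c))
    (D : Kˣ) (hD : ¬ IsSquare (D : K)) (h1 : Fintype.card K % 4 = 1) {p p' : Ipts K} {l : K}
    (hl : Qf K (nv p) = l ^ 2 * Qf K (nv p')) (hr : ¬ IsSquare (Qf K (nv p + l • nv p'))) :
    Ek χ' χ ψ c p' p = Ek χ' χ ψ (fun α => c (D⁻¹ * α)) p p' := by
  have hl0 : l ≠ 0 := by rintro rfl; apply Qf_nv_ne p; rw [hl]; ring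
  set r := nv p + l • nv p' with hrd
  have hr0 : Qf K r ≠ 0 := by intro h; apply hr; rw [h]; exact IsSquare.zero
  have hbv : bf (nv p) r = - Qf K r := by
    have : bf (nv p) r + Qf K r = l ^ 2 * Qf K (nv p') - Qf K (nv p) := by
      simp [hrd, bf, Qf]; ring
    linear_combination this - hl
  have hbw : bf (nv p') r * l = - Qf K r := by
    have : bf (nv p') r * l + Qf K r = Qf K (nv p) - l ^ 2 * Qf K (nv p') := by
      simp [hrd, bf, Qf]; ring
    linear_combination this + hl
  have hp : mv (Rm r) p = p' := by
    have h3 := vecMul_Rm r (nv p)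
    rw [Rm] at h3 ⊢
    rw [mv_eq_iff (Rm_det_ne hr0), h3, hbv]
    refine ⟨-Qf K r * l, ?_⟩
    ext i; simp [hrd]; ring
  have hp' : mv (Rm r) p' = p := by
    have := mv_Rm_involutive hr0 p
    rwa [hp] at this
  set T : Kˣ := Units.mk0 (-Qf K r) (neg_ne_zero.2 hr0) with hT
  have hT' : ¬ IsSquare (T : K) := by rw [hT, Units.val_mk0, isSquare_neg_iff h1]; exact hr
  have hfac : ∀ s, mv (Mg (r 1) (r 2) (-(r 0) / T) (-(r 1) / T)) (mv (Mg 1 0 0 (T : K)) s) =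
      mv (Rm r) s := by
    intro s
    have hT0 := T.ne_zero
    have hdet : r 1 * (-(r 1) / T) - r 2 * (-(r 0) / T) ≠ 0 := by
      have h5 := Rm_det_ne hr0
      have : r 1 * (-(r 1) / T) - r 2 * (-(r 0) / T) = (r 1 * -(r 1) - r 2 * -(r 0)) / (T : K) := by
        ring
      rw [this]; exact div_ne_zero h5 hT0
    rw [mv_mv (by simp) hdet, Rm]
    congr 2
    · ring
    · ring
    · field_simp; ring
    · field_simp; ring
  have hdet1 : r 1 * (-(r 1) / T) - r 2 * (-(r 0) / T) = 1 := by
    have : r 1 * (-(r 1) / T) - r 2 * (-(r 0) / T) = (r 1 * -(r 1) - r 2 * -(r 0)) / (T : K) := by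
      ring
    rw [this, Rm_det, hT, Units.val_mk0, div_self (neg_ne_zero.2 hr0)]
  have h6 := hE _ _ _ _ hdet1 (mv (Mg 1 0 0 (T : K)) p) (mv (Mg 1 0 0 (T : K)) p')
  rw [hfac, hfac, hp, hp', Ek_diag hχ hχ'] at h6
  rw [h6]
  obtain ⟨k, hk0, hk⟩ := exists_sq_mul_of_not hD hT'
  have h7 : (fun α => c (T⁻¹ * α)) = fun α => c (D⁻¹ * α) := by
    funext α
    rw [← hc (Units.mk0 k hk0) (D⁻¹ * α)]
    congr 1
    have hDT : D = Units.mk0 k hk0 ^ 2 * T := Units.ext hk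
    rw [hDT, mul_inv, ← mul_assoc, mul_inv_cancel_left]
  rw [h7]

/-- An invariant kernel equals its transpose up to twisting the coefficients by a nonsquare `D`: two
internal points are interchanged by a reflection of nonsquare determinant, unless their join is a
secant, in which case both sides vanish. -/
theorem Ek_swap (h1 : Fintype.card K % 4 = 1) (hθ : ThetaData θ n) (hψ : ψ.IsPrimitive)
    (j j' : Fin n) (c : Kˣ → F) (hc : ∀ a α : Kˣ, c (a ^ 2 * α) = c α)
    (hE : HInv (Ek (θ ^ (j'.1 + 1)) (θ ^ (j.1 + 1)) ψ c))
    (D : Kˣ) (hD : ¬ IsSquare (D : K)) (p p' : Ipts K) :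
    Ek (θ ^ (j'.1 + 1)) (θ ^ (j.1 + 1)) ψ c p' p =
      Ek (θ ^ (j'.1 + 1)) (θ ^ (j.1 + 1)) ψ (fun α => c (D⁻¹ * α)) p p' := by
  obtain ⟨l, hl0, hl⟩ := exists_sq_mul_of_not (nv_internal p) (nv_internal p')
  by_cases ha : IsSquare (Qf K (nv p + l • nv p'))
  swap
  · exact Ek_swap_aux (hθ.good j) (hθ.good j') c hc hE D hD h1 hl ha
  by_cases hb : IsSquare (Qf K (nv p + (-l) • nv p'))
  swap
  · exact Ek_swap_aux (hθ.good j) (hθ.good j') c hc hE D hD h1 (by rw [hl]; ring) hb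
  have hne : p ≠ p' := by
    rintro rfl
    have h3 : (l - 1) * (l + 1) = 0 := by
      apply mul_right_cancel₀ (Qf_nv_ne p)
      linear_combination -hl
    have h4 : ¬ IsSquare (Qf K ((2 : K) • nv p)) := by
      rw [Qf_smul, isSquare_sq_mul (two_ne_zero_of_card h1)]; exact nv_internal p
    rcases mul_eq_zero.1 h3 with h5 | h5
    · apply h4; rw [two_smul]; rwa [sub_eq_zero.1 h5, one_smul] at ha
    · apply h4; rw [two_smul]
      rwa [show -l = 1 by linear_combination -h5, one_smul] at hb
  have hsq : IsSquare (bf (nv p) (nv p') ^ 2 - 4 * (Qf K (nv p) * Qf K (nv p'))) := by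
    rw [← isSquare_sq_mul hl0, ← isSquare_neg_iff h1]
    have h3 := ha.mul hb
    have h4 : Qf K (nv p + l • nv p') = Qf K (nv p) + l ^ 2 * Qf K (nv p') -
        l * bf (nv p) (nv p') := by simp [bf, Qf]; ring
    have h5 : Qf K (nv p + (-l) • nv p') = Qf K (nv p) + l ^ 2 * Qf K (nv p') +
        l * bf (nv p) (nv p') := by simp [bf, Qf]; ring
    rw [h4, h5, hl] at h3
    rw [hl]
    obtain ⟨t, ht⟩ := h3
    exact ⟨t, by linear_combination ht⟩
  rw [← Ek_diag (hθ.good j) (hθ.good j')]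
  rw [Ek_secant h1 hθ hψ j' c hE hne.symm (by rw [bf_comm, mul_comm (Qf K (nv p'))]; exact hsq),
    Ek_secant h1 hθ hψ j' c hE]
  · intro h
    apply hne
    exact mv_injective (by simp) h
  · have hq : ∀ p : Ipts K, Qf K (nv (mv (Mg 1 0 0 (D : K)) p)) = (D : K) ^ 2 * Qf K (nv p) := by
      intro p
      rw [Qf_nv, Qf_nv, nv_mv_diag one_ne_zero D.ne_zero]; simp; ring
    have hb : bf (nv (mv (Mg 1 0 0 (D : K)) p)) (nv (mv (Mg 1 0 0 (D : K)) p')) =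
        (D : K) ^ 2 * bf (nv p) (nv p') := by
      rw [bf_nv, bf_nv, hq, hq, nv_mv_diag one_ne_zero D.ne_zero,
        nv_mv_diag one_ne_zero D.ne_zero]
      simp; ring
    rw [hb, hq, hq]
    obtain ⟨t, ht⟩ := hsq
    exact ⟨(D : K) ^ 2 * t, by linear_combination (D : K) ^ 4 * ht⟩

/-- Comparison of coefficients in the identity `Ek_swap`, possible because the `xv` are linearly
independent: for `j = j'` the coefficients are invariant under multiplication by nonsquares (as
`-1` is a square), and for `j ≠ j'` they vanish. -/
theorem coeff_swap (h1 : Fintype.card K % 4 = 1) (hθ : ThetaData θ n) (hψ : ψ.IsPrimitive)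
    (j j' : Fin n) (c : Kˣ → F) (hc : ∀ a α : Kˣ, c (a ^ 2 * α) = c α)
    (hE : HInv (Ek (θ ^ (j'.1 + 1)) (θ ^ (j.1 + 1)) ψ c))
    (D : Kˣ) (hD : ¬ IsSquare (D : K)) (α : Kˣ) :
    c (D⁻¹ * α) = if j' = j then c (-α) else 0 := by
  have key : ∀ p', c (D⁻¹ * α) * xv (θ ^ (j.1 + 1)) ψ (-α : Kˣ) p' =
      if j' = j then c (-α) * xv (θ ^ (j'.1 + 1)) ψ (-α : Kˣ) p' else 0 := by
    intro p'
    have h3 := indep_eq h1 hθ hψ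
      (fun i α => if i = j' then c (D⁻¹ * α) * xv (θ ^ (j.1 + 1)) ψ (-α : Kˣ) p' else 0)
      (fun i α => if i = j then c (-α) * xv (θ ^ (j'.1 + 1)) ψ (-α : Kˣ) p' else 0) ?_ j' α
    · simpa using h3
    · intro p
      have h4 := Ek_swap h1 hθ hψ j j' c hc hE D hD p p'
      rw [Finset.sum_eq_single j', Finset.sum_eq_single j]
      · simp only [if_true]
        have h5 : ∀ α : Kˣ, c (D⁻¹ * α) * xv (θ ^ (j.1 + 1)) ψ (-α : Kˣ) p' *
            xv (θ ^ (j'.1 + 1)) ψ (α : K) p = c (D⁻¹ * α) * (xv (θ ^ (j'.1 + 1)) ψ (α : K) p *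
            xv (θ ^ (j.1 + 1)) ψ (-α : Kˣ) p') := fun α => by ring
        simp_rw [h5]
        unfold Ek at h4
        rw [← h4, ← sum_neg_units]
        exact Finset.sum_congr rfl fun α _ => by rw [neg_neg]; ring
      · intro i _ hi; simp [hi]
      · simp
      · intro i _ hi; simp [hi]
      · simp
  have hne : xv (θ ^ (j.1 + 1)) ψ (-α : Kˣ) ≠ 0 :=
    (xv_linearIndependent h1 hθ hψ).ne_zero (j, -α)
  obtain ⟨p', hp'⟩ := Function.ne_iff.1 hne
  have h6 := key p'
  split_ifs at h6 ⊢ with hj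
  · subst hj
    exact mul_right_cancel₀ hp' h6
  · exact (mul_eq_zero.1 h6).resolve_right hp'

end Swap

/-! ### Simplicity and pairwise non-isomorphism -/

section Simplicity

variable {K}
variable {d : K} [hd : Fact (∀ r : K, r ^ 2 ≠ d + 0 * r)]
variable {F : Type} [Field F] [CharP F 2] {χ χ' : MulChar (QL d) F}
variable {θ : MulChar (QL d) F} {n : ℕ} {ψ : AddChar K F}

/-- The pull-back of a function along the point map of a matrix. -/
def pull (a b c e : K) (x : Ipts K → F) : Ipts K → F := fun p => x (mv (Mg a b c e) p)

theorem mv_mv_inv {a b c e : K} (h : a * e - b * c = 1) (p : Ipts K) :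
    mv (Mg a b c e) (mv (Mg e (-b) (-c) a) p) = p := by
  have := mv_inv_mv (a := e) (b := -b) (c := -c) (e := a) (by linear_combination h) p
  rwa [neg_neg, neg_neg] at this

theorem det_inv {a b c e : K} (h : a * e - b * c = 1) : e * a - -b * -c = 1 := by
  linear_combination h

theorem pull_mem (h1 : Fintype.card K % 4 = 1) (hθ : ThetaData θ n) (hψ : ψ.IsPrimitive)
    (j : Fin n) {x : Ipts K → F} (hx : x ∈ Mj (θ ^ (j.1 + 1)) ψ) {a b c e : K}
    (h : a * e - b * c = 1) : pull a b c e x ∈ Mj (θ ^ (j.1 + 1)) ψ := by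
  refine Mj_stable h1 hθ hψ j hx (a := e) (b := -b) (c := -c) (e := a) ?_ ?_
  · rw [det_inv h]; exact one_ne_zero
  · intro p; simp only [pull]; rw [mv_mv_inv h]

theorem co_pull (α β : Kˣ) {a b c e : K} (h : a * e - b * c = 1) :
    co χ ψ α (pull a b c e (xv χ ψ (β : K))) =
      co χ ψ (-β) (pull e (-b) (-c) a (xv χ ψ (-α : Kˣ))) := by
  unfold co pull
  refine Fintype.sum_equiv (Equiv.ofBijective _ (mv_bijective (a := a) (b := b) (c := c) (e := e)
    (by rw [h]; exact one_ne_zero))) _ _ ?_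
  intro p
  rw [Equiv.ofBijective_apply, mv_inv_mv h, neg_neg, mul_comm]

/-- A diagonal kernel intertwining the two matrix representations is invariant. -/
theorem Ek_inv (h1 : Fintype.card K % 4 = 1) (hθ : ThetaData θ n) (hψ : ψ.IsPrimitive)
    (j j' : Fin n) (c : Kˣ → F)
    (hG : ∀ a b c' e : K, a * e - b * c' = 1 → ∀ α β : Kˣ,
      co (θ ^ (j'.1 + 1)) ψ α (pull a b c' e (xv (θ ^ (j'.1 + 1)) ψ (β : K))) * c β =
        c α * co (θ ^ (j.1 + 1)) ψ α (pull a b c' e (xv (θ ^ (j.1 + 1)) ψ (β : K)))) :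
    HInv (Ek (θ ^ (j'.1 + 1)) (θ ^ (j.1 + 1)) ψ c) := by
  intro a b c' e h p p'
  have hA : ∀ β : Kˣ, xv (θ ^ (j'.1 + 1)) ψ (β : K) (mv (Mg a b c' e) p) =
      ∑ α : Kˣ, co (θ ^ (j'.1 + 1)) ψ α (pull a b c' e (xv (θ ^ (j'.1 + 1)) ψ (β : K))) *
        xv (θ ^ (j'.1 + 1)) ψ (α : K) p := by
    intro β
    have := congrFun (eq_sum_co h1 hθ hψ j' (pull_mem h1 hθ hψ j' (xv_mem β) h)) p
    simpa [pull] using this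
  have hB : ∀ α : Kˣ, xv (θ ^ (j.1 + 1)) ψ (-α : Kˣ) p' =
      ∑ β : Kˣ, co (θ ^ (j.1 + 1)) ψ α (pull a b c' e (xv (θ ^ (j.1 + 1)) ψ (β : K))) *
        xv (θ ^ (j.1 + 1)) ψ (-β : Kˣ) (mv (Mg a b c' e) p') := by
    intro α
    have := congrFun (eq_sum_co h1 hθ hψ j (pull_mem h1 hθ hψ j (xv_mem (-α)) (det_inv h)))
      (mv (Mg a b c' e) p')
    simp only [Finset.sum_apply, Pi.smul_apply, smul_eq_mul] at this
    rw [pull, mv_inv_mv h] at this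
    rw [this, ← sum_neg_units]
    refine Finset.sum_congr rfl fun β _ => ?_
    rw [co_pull α β h]
  unfold Ek
  simp_rw [hA]
  conv_rhs =>
    enter [2, α]
    rw [hB α]
  simp_rw [Finset.sum_mul, Finset.mul_sum]
  rw [Finset.sum_comm]
  refine Finset.sum_congr rfl fun α _ => Finset.sum_congr rfl fun β _ => ?_
  linear_combination (xv (θ ^ (j'.1 + 1)) ψ (α : K) p *
    xv (θ ^ (j.1 + 1)) ψ (-β : Kˣ) (mv (Mg a b c' e) p')) * hG a b c' e h α β

theorem pull_unip (b : K) (α : K) :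
    pull 1 b 0 1 (xv χ ψ α) = ψ (α * b) • xv χ ψ α := by
  funext p; exact xv_unip b α p

theorem pull_torus (hχ : GoodChar χ) (a : Kˣ) (α : Kˣ) :
    pull ((a⁻¹ : Kˣ) : K) 0 0 (a : K) (xv χ ψ (α : K)) = xv χ ψ ((a ^ 2 * α : Kˣ) : K) := by
  funext p
  rw [pull, xv_diag hχ (Units.ne_zero _) (Units.ne_zero _)]
  congr 1
  push_cast
  have := a.ne_zero
  field_simp

theorem det_torus (a : Kˣ) : ((a⁻¹ : Kˣ) : K) * a - 0 * 0 = 1 := by simp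

/-- Stability under pull-back by the unimodular group. -/
def PStable (W : Submodule F (Ipts K → F)) : Prop :=
  ∀ a b c e : K, a * e - b * c = 1 → ∀ x ∈ W, pull a b c e x ∈ W

/-- A stable subspace contains the weight components of its elements, since averaging over the unipotent
subgroup projects to a weight space. -/
theorem weight_mem (h1 : Fintype.card K % 4 = 1) (hθ : ThetaData θ n) (hψ : ψ.IsPrimitive)
    (j : Fin n) {W : Submodule F (Ipts K → F)} (hW : W ≤ Mj (θ ^ (j.1 + 1)) ψ)
    (hs : PStable W) {x : Ipts K → F} (hx : x ∈ W) (α : Kˣ)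
    (hα : co (θ ^ (j.1 + 1)) ψ α x ≠ 0) : xv (θ ^ (j.1 + 1)) ψ (α : K) ∈ W := by
  have h3 : ∑ b : K, ψ (-(α * b)) • pull 1 b 0 1 x ∈ W :=
    Submodule.sum_mem _ fun b _ => Submodule.smul_mem _ _ (hs 1 b 0 1 (by simp) x hx)
  have h4 : ∑ b : K, ψ (-(α * b)) • pull 1 b 0 1 x =
      co (θ ^ (j.1 + 1)) ψ α x • xv (θ ^ (j.1 + 1)) ψ (α : K) := by
    have hx' := eq_sum_co h1 hθ hψ j (hW hx)
    have h5 : ∀ b, pull 1 b 0 1 x = ∑ β : Kˣ, (co (θ ^ (j.1 + 1)) ψ β x * ψ (β * b)) •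
        xv (θ ^ (j.1 + 1)) ψ (β : K) := by
      intro b
      funext p
      have := congrFun hx' (mv (Mg 1 b 0 1) p)
      simp only [Finset.sum_apply, Pi.smul_apply, smul_eq_mul, xv_unip] at this ⊢
      rw [pull, this]
      exact Finset.sum_congr rfl fun β _ => by ring
    simp_rw [h5, Finset.smul_sum, smul_smul]
    rw [Finset.sum_comm, Finset.sum_eq_single α]
    · rw [← Finset.sum_smul]
      congr 1
      have : ∀ b : K, ψ (-(α * b)) * (co (θ ^ (j.1 + 1)) ψ α x * ψ (α * b)) =
          co (θ ^ (j.1 + 1)) ψ α x := by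
        intro b
        have h6 : ψ (-(α * b)) * ψ (α * b) = 1 := by
          rw [← AddChar.map_add_eq_mul, neg_add_cancel, AddChar.map_zero_eq_one]
        linear_combination co (θ ^ (j.1 + 1)) ψ α x * h6
      simp_rw [this]
      rw [Finset.sum_const, Finset.card_univ, nsmul_eq_mul, card_eq_one h1, one_mul]
    · intro β _ hb
      rw [← Finset.sum_smul]
      have : ∀ b : K, ψ (-(α * b)) * (co (θ ^ (j.1 + 1)) ψ β x * ψ (β * b)) =
          co (θ ^ (j.1 + 1)) ψ β x * ψ (b * (β - α)) := by
        intro b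
        have h6 : b * ((β : K) - α) = -(α * b) + β * b := by ring
        rw [h6, AddChar.map_add_eq_mul]; ring
      simp_rw [this]
      rw [← Finset.mul_sum, fourier h1 hψ, if_neg, mul_zero, zero_smul]
      intro h7
      exact hb (Units.ext (sub_eq_zero.1 h7))
    · simp
  rw [h4] at h3
  exact (Submodule.smul_mem_iff _ hα).1 h3

theorem coeff_neg (h1 : Fintype.card K % 4 = 1) {c : Kˣ → F}
    (hc : ∀ a α : Kˣ, c (a ^ 2 * α) = c α) (α : Kˣ) : c (-α) = c α := by
  obtain ⟨i, hi0, hi⟩ := exists_neg_one_sq (K := K) h1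
  rw [← hc (Units.mk0 i hi0) α]
  congr 1
  apply Units.ext
  push_cast
  rw [Units.val_mk0, hi]; ring

/-- The set of weights of a stable subspace is a union of square classes. Its indicator function defines
an invariant diagonal kernel, so by `coeff_swap` it does not distinguish the two square classes. -/
theorem Mj_simple (h1 : Fintype.card K % 4 = 1) (hθ : ThetaData θ n) (hψ : ψ.IsPrimitive)
    (j : Fin n) {W : Submodule F (Ipts K → F)} (hW : W ≤ Mj (θ ^ (j.1 + 1)) ψ)
    (hs : PStable W) (h0 : W ≠ ⊥) : W = Mj (θ ^ (j.1 + 1)) ψ := by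
  set c : Kˣ → F := fun α => if xv (θ ^ (j.1 + 1)) ψ (α : K) ∈ W then 1 else 0 with hcd
  have hT : ∀ a α : Kˣ, xv (θ ^ (j.1 + 1)) ψ (α : K) ∈ W →
      xv (θ ^ (j.1 + 1)) ψ ((a ^ 2 * α : Kˣ) : K) ∈ W := by
    intro a α h
    rw [← pull_torus (hθ.good j)]
    exact hs _ _ _ _ (det_torus a) _ h
  have hT' : ∀ a α : Kˣ, xv (θ ^ (j.1 + 1)) ψ ((a ^ 2 * α : Kˣ) : K) ∈ W ↔
      xv (θ ^ (j.1 + 1)) ψ (α : K) ∈ W := by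
    intro a α
    refine ⟨fun h => ?_, hT a α⟩
    have := hT a⁻¹ _ h
    rwa [← mul_assoc, ← mul_pow, inv_mul_cancel, one_pow, one_mul] at this
  have hc : ∀ a α : Kˣ, c (a ^ 2 * α) = c α := by
    intro a α
    simp only [hcd]
    rw [hT']
  have hneg := coeff_neg h1 hc
  -- a matrix entry from a weight in `W` to a weight outside `W` vanishes
  have hzero : ∀ a b c' e : K, a * e - b * c' = 1 → ∀ α β : Kˣ, c β = 1 → c α = 0 →
      co (θ ^ (j.1 + 1)) ψ α (pull a b c' e (xv (θ ^ (j.1 + 1)) ψ (β : K))) = 0 := by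
    intro a b c' e h α β hb ha
    by_contra hne
    have hβ : xv (θ ^ (j.1 + 1)) ψ (β : K) ∈ W := by
      by_contra hn
      simp [hcd, hn] at hb
    have := weight_mem h1 hθ hψ j hW hs (hs _ _ _ _ h _ hβ) α hne
    simp [hcd, this] at ha
  have hE : HInv (Ek (θ ^ (j.1 + 1)) (θ ^ (j.1 + 1)) ψ c) := by
    apply Ek_inv h1 hθ hψ
    intro a b c' e h α β
    have h01 : ∀ α, c α = 0 ∨ c α = 1 := by
      intro α; simp only [hcd]; split_ifs <;> simp
    rcases h01 α with ha | ha <;> rcases h01 β with hb | hb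
    · rw [ha, hb]; simp
    · rw [hzero a b c' e h α β hb ha, ha]; simp
    · rw [co_pull α β h, hzero _ _ _ _ (det_inv h) (-β) (-α) (by rw [hneg, ha])
        (by rw [hneg, hb])]
      simp
    · rw [ha, hb]; ring
  obtain ⟨D, hD⟩ : ∃ D : Kˣ, ¬ IsSquare (D : K) := by
    have := QL.not_sq (d := d)
    exact ⟨Units.mk0 d (by rintro rfl; exact this IsSquare.zero), this⟩
  have hswap : ∀ α, c (D⁻¹ * α) = c α := by
    intro α
    have := coeff_swap h1 hθ hψ j j c hc hE D hD α
    rw [if_pos rfl, hneg] at this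
    exact this
  obtain ⟨x, hx, hx0⟩ := (Submodule.ne_bot_iff W).1 h0
  obtain ⟨α₀, hα₀⟩ : ∃ α, co (θ ^ (j.1 + 1)) ψ α x ≠ 0 := by
    by_contra! hall
    apply hx0
    rw [eq_sum_co h1 hθ hψ j (hW hx)]
    simp [hall]
  have hm := weight_mem h1 hθ hψ j hW hs hx α₀ hα₀
  have hc0 : c α₀ = 1 := by simp [hcd, hm]
  have hall : ∀ α, c α = 1 := by
    intro α
    by_cases hsq : IsSquare ((α / α₀ : Kˣ) : K)
    · obtain ⟨t, ht⟩ := hsq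
      have ht0 : t ≠ 0 := by rintro rfl; exact (α / α₀).ne_zero (by rw [ht]; simp)
      have : α = (Units.mk0 t ht0) ^ 2 * α₀ := by
        rw [← div_eq_iff_eq_mul]
        apply Units.ext
        rw [ht]; push_cast; rw [Units.val_mk0]; ring
      rw [this, hc, hc0]
    · obtain ⟨t, ht0, ht⟩ := exists_sq_mul_of_not hsq hD
      have : α = (Units.mk0 t ht0) ^ 2 * (D * α₀) := by
        rw [← mul_assoc, ← div_eq_iff_eq_mul]
        exact Units.ext ht
      rw [this, hc, ← hswap, inv_mul_cancel_left, hc0]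
  apply le_antisymm hW
  refine Submodule.span_le.2 ?_
  rintro _ ⟨α, rfl⟩
  by_contra hn
  have h9 := hall α
  simp only [hcd] at h9
  have hn2 : xv (θ ^ (j.1 + 1)) ψ (α : K) ∉ W := hn
  rw [if_neg hn2] at h9
  exact zero_ne_one h9

/-- An isomorphism multiplies each weight vector by a nonzero scalar, which gives an invariant diagonal
kernel between two different characters; by `coeff_swap` its coefficients are zero. -/
theorem Mj_not_iso (h1 : Fintype.card K % 4 = 1) (hθ : ThetaData θ n) (hψ : ψ.IsPrimitive)
    (j j' : Fin n) (hj : j ≠ j') (f : Mj (θ ^ (j.1 + 1)) ψ ≃ₗ[F] Mj (θ ^ (j'.1 + 1)) ψ)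
    (hf : ∀ a b c e : K, a * e - b * c = 1 → ∀ x y : Mj (θ ^ (j.1 + 1)) ψ,
      (y : Ipts K → F) = pull a b c e x → (f y : Ipts K → F) = pull a b c e (f x)) : False := by
  set x : Kˣ → Mj (θ ^ (j.1 + 1)) ψ := fun α => ⟨xv (θ ^ (j.1 + 1)) ψ (α : K), xv_mem α⟩ with hx
  set c : Kˣ → F := fun α => co (θ ^ (j'.1 + 1)) ψ α (f (x α)) with hcd
  -- `f` preserves weights
  have hw : ∀ α γ : Kˣ, γ ≠ α → co (θ ^ (j'.1 + 1)) ψ γ (f (x α)) = 0 := by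
    intro α γ hne
    by_contra hn
    have hp : ∀ b : K, ψ (b * (γ - α)) = 1 := by
      intro b
      have h3 := hf 1 b 0 1 (by simp) (x α) (ψ (α * b) • x α) (by
        rw [hx]; exact (pull_unip b (α : K)).symm)
      rw [map_smul] at h3
      have h4 := eq_sum_co h1 hθ hψ j' (f (x α)).2
      have h5 := indep_zero_single h1 hθ hψ j' (fun δ => co (θ ^ (j'.1 + 1)) ψ δ (f (x α)) *
        (ψ (α * b) - ψ (δ * b))) ?_ γ
      · have h6 := (mul_eq_zero.1 h5).resolve_left hn
        have h7 : b * ((γ : K) - α) = γ * b + -(α * b) := by ring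
        rw [h7, AddChar.map_add_eq_mul, ← sub_eq_zero.1 h6, ← AddChar.map_add_eq_mul,
          add_neg_cancel, AddChar.map_zero_eq_one]
      · intro p
        have h8 := congrFun h3 p
        have h9 := congrFun h4 p
        have h10 := congrFun h4 (mv (Mg 1 b 0 1) p)
        simp only [Finset.sum_apply, Pi.smul_apply, smul_eq_mul, xv_unip] at h9 h10
        rw [pull, h10] at h8
        simp only [Submodule.coe_smul, Pi.smul_apply, smul_eq_mul] at h8
        rw [h9, Finset.mul_sum] at h8
        rw [← sub_eq_zero.2 h8, ← Finset.sum_sub_distrib]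
        exact Finset.sum_congr rfl fun δ _ => by ring
    have h11 := fourier h1 hψ ((γ : K) - α)
    simp_rw [hp] at h11
    rw [if_neg (fun h => hne (Units.ext (sub_eq_zero.1 h))), Finset.sum_const, Finset.card_univ,
      nsmul_eq_mul, card_eq_one h1, one_mul] at h11
    exact one_ne_zero h11
  have hfx : ∀ α, (f (x α) : Ipts K → F) = c α • xv (θ ^ (j'.1 + 1)) ψ (α : K) := by
    intro α
    rw [eq_sum_co h1 hθ hψ j' (f (x α)).2, Finset.sum_eq_single α]
    · intro γ _ hg; rw [hw α γ hg, zero_smul]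
    · simp
  have hcne : ∀ α, c α ≠ 0 := by
    intro α h0
    have h3 := hfx α
    rw [h0, zero_smul] at h3
    have h4 : x α = 0 := by
      apply f.injective
      rw [map_zero]; exact Subtype.ext h3
    exact (xv_linearIndependent h1 hθ hψ).ne_zero (j, α) (congrArg Subtype.val h4)
  have hxne : ∀ α : Kˣ, xv (θ ^ (j'.1 + 1)) ψ (α : K) ≠ 0 := fun α =>
    (xv_linearIndependent h1 hθ hψ).ne_zero (j', α)
  have hc : ∀ a α : Kˣ, c (a ^ 2 * α) = c α := by
    intro a α
    have h3 := hf _ _ _ _ (det_torus a) (x α) (x (a ^ 2 * α)) (pull_torus (hθ.good j) a α).symm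
    rw [hfx, hfx] at h3
    have h4 : pull ((a⁻¹ : Kˣ) : K) 0 0 (a : K) (c α • xv (θ ^ (j'.1 + 1)) ψ (α : K)) =
        c α • xv (θ ^ (j'.1 + 1)) ψ ((a ^ 2 * α : Kˣ) : K) := by
      rw [← pull_torus (hθ.good j')]; rfl
    rw [h4] at h3
    exact smul_left_injective F (hxne _) h3
  have hE : HInv (Ek (θ ^ (j'.1 + 1)) (θ ^ (j.1 + 1)) ψ c) := by
    apply Ek_inv h1 hθ hψ
    intro a b c' e h α β
    have hm := pull_mem h1 hθ hψ j (xv_mem (χ := θ ^ (j.1 + 1)) (ψ := ψ) β) h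
    have h3 := hf a b c' e h (x β) ⟨_, hm⟩ rfl
    have h4 : (⟨_, hm⟩ : Mj (θ ^ (j.1 + 1)) ψ) = ∑ α : Kˣ,
        co (θ ^ (j.1 + 1)) ψ α (pull a b c' e (xv (θ ^ (j.1 + 1)) ψ (β : K))) • x α := by
      apply Subtype.ext
      rw [Submodule.coe_sum]
      exact eq_sum_co h1 hθ hψ j hm
    rw [h4, map_sum, Submodule.coe_sum, hfx] at h3
    have h5 := congrArg (co (θ ^ (j'.1 + 1)) ψ α) h3
    have h6 : ∀ γ : Kˣ, ((f (co (θ ^ (j.1 + 1)) ψ γ (pull a b c' e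
        (xv (θ ^ (j.1 + 1)) ψ (β : K))) • x γ) : Mj (θ ^ (j'.1 + 1)) ψ) : Ipts K → F) =
        (co (θ ^ (j.1 + 1)) ψ γ (pull a b c' e (xv (θ ^ (j.1 + 1)) ψ (β : K))) * c γ) •
          xv (θ ^ (j'.1 + 1)) ψ (γ : K) := by
      intro γ
      rw [map_smul, Submodule.coe_smul, hfx, smul_smul]
    simp_rw [h6] at h5
    rw [co_sum] at h5
    simp_rw [co_xv h1 hθ hψ] at h5
    have h7 : co (θ ^ (j'.1 + 1)) ψ α (pull a b c' e (c β • xv (θ ^ (j'.1 + 1)) ψ (β : K))) =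
        c β * co (θ ^ (j'.1 + 1)) ψ α (pull a b c' e (xv (θ ^ (j'.1 + 1)) ψ (β : K))) := by
      unfold co pull
      rw [Finset.mul_sum]
      exact Finset.sum_congr rfl fun p _ => by simp only [Pi.smul_apply, smul_eq_mul]; ring
    rw [h7] at h5
    simp at h5
    linear_combination -h5
  obtain ⟨D, hD⟩ : ∃ D : Kˣ, ¬ IsSquare (D : K) := by
    have := QL.not_sq (d := d)
    exact ⟨Units.mk0 d (by rintro rfl; exact this IsSquare.zero), this⟩
  have := coeff_swap h1 hθ hψ j j' c hc hE D hD 1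
  rw [if_neg hj.symm] at this
  exact hcne _ this

end Simplicity

/-! ### The group `H` and the field of coefficients -/

section Assembly

variable {K}

/-- The trace to the prime field composed with a faithful character of the prime field; the latter exists
since the characteristic of `K` is odd. -/
theorem exists_primitive_addChar (h1 : Fintype.card K % 4 = 1) :
    ∃ ψ : AddChar K F2bar, ψ.IsPrimitive := by
  have h2 : ringChar K ≠ 2 := by
    intro h
    have := FiniteField.even_card_of_char_two h
    omega
  set p := ringChar K with hp
  have : Fact p.Prime := ⟨CharP.char_is_prime K p⟩
  have : CharP F2bar 2 := charP_of_injective_algebraMap (algebraMap (ZMod 2) F2bar).injective 2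
  have hp0 : ((p : ℕ) : F2bar) ≠ 0 := by
    rw [Ne, CharP.cast_eq_zero_iff F2bar 2, Nat.dvd_prime_two_le (Fact.out : p.Prime) le_rfl]
    exact h2.symm
  have : NeZero ((p : ℕ) : F2bar) := ⟨hp0⟩
  obtain ⟨ζ, hζ⟩ := HasEnoughRootsOfUnity.exists_primitiveRoot F2bar p
  let : Algebra (ZMod p) K := ZMod.algebra _ _
  have hprim := AddChar.zmodChar_primitive_of_primitive_root p hζ
  refine ⟨(AddChar.zmodChar p hζ.pow_eq_one).compAddMonoidHom
    (Algebra.trace (ZMod p) K).toAddMonoidHom, AddChar.IsPrimitive.of_ne_one ?_⟩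
  obtain ⟨a, ha⟩ := FiniteField.trace_to_zmod_nondegenerate K (one_ne_zero (α := K))
  rw [one_mul] at ha
  exact AddChar.ne_one_iff.2 ⟨a, fun hf => ha <| (hprim.zmod_char_eq_one_iff p _).mp hf⟩

theorem actF_eq_pull {a b c e : K} (h : a * e - b * c = 1) (x : Ipts K → F2bar) :
    actF K (Mg a b c e) x = pull e (-b) (-c) a x := by
  funext r
  obtain ⟨p, rfl⟩ := (mv_bijective (a := a) (b := b) (c := c) (e := e)
    (by rw [h]; exact one_ne_zero)).2 r
  rw [actF_mv (by rw [h]; exact one_ne_zero), pull, mv_inv_mv h]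

theorem pull_eq_actF {a b c e : K} (h : a * e - b * c = 1) (x : Ipts K → F2bar) :
    pull a b c e x = actF K (Mg e (-b) (-c) a) x := by
  rw [actF_eq_pull (det_inv h), neg_neg, neg_neg]

theorem Mg_mem_Hset {a b c e : K} (h : a * e - b * c = 1) : Mg a b c e ∈ Hset K :=
  ⟨a, b, c, e, h, rfl⟩

theorem HStable.pStable {W : Submodule F2bar (Ipts K → F2bar)} (hW : HStable K W) :
    PStable W := by
  intro a b c e h x hx
  rw [pull_eq_actF h]
  exact hW _ (Mg_mem_Hset (det_inv h)) x hx

end Assembly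

/-- If `q ≡ 1 (mod 4)`, then `Ker φ` is the internal direct sum of `(q-1)/4`
pairwise non-isomorphic simple `F[H]`-submodules, each of dimension `q-1`. -/
theorem ker_phi_decomposition_one (h1 : Fintype.card K % 4 = 1) :
    ∃ Ms : Fin ((Fintype.card K - 1) / 4) → Submodule F2bar (Ipts K → F2bar),
      (∀ i, HStable K (Ms i)) ∧
      (∀ i, HSimple K (Ms i)) ∧
      (∀ i, Module.finrank F2bar (Ms i) = Fintype.card K - 1) ∧
      (∀ i j, i ≠ j → ¬ HIso K (Ms i) (Ms j)) ∧
      iSupIndep Ms ∧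
      (⨆ i, Ms i) = LinearMap.ker (phi K) := by
  have h2 : ringChar K ≠ 2 := by
    intro h
    have := FiniteField.even_card_of_char_two h
    omega
  have : CharP F2bar 2 := charP_of_injective_algebraMap (algebraMap (ZMod 2) F2bar).injective 2
  obtain ⟨d, hd⟩ := FiniteField.exists_nonsquare h2
  have : Fact (∀ r : K, r ^ 2 ≠ d + 0 * r) :=
    ⟨fun r hr => hd ⟨r, by linear_combination -hr⟩⟩
  obtain ⟨ψ, hψ⟩ := exists_primitive_addChar h1
  obtain ⟨θ, ho, ht, hs⟩ := exists_theta (d := d) (F := F2bar) h1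
  have hθ : ThetaData θ ((Fintype.card K - 1) / 4) := ⟨ho, ht, hs⟩
  have hst : ∀ i : Fin ((Fintype.card K - 1) / 4), HStable K (Mj (θ ^ (i.1 + 1)) ψ) := by
    rintro i _ ⟨a, b, c, e, h, rfl⟩ x hx
    have h0 : a * e - b * c ≠ 0 := by rw [h]; exact one_ne_zero
    exact Mj_stable h1 hθ hψ i hx h0 (actF_mv h0 x)
  refine ⟨fun j => Mj (θ ^ (j.1 + 1)) ψ, hst, fun j => ⟨?_, ?_⟩, finrank_Mj h1 hθ hψ, ?_,
    iSupIndep_Mj h1 hθ hψ, ?_⟩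
  · intro hbot
    have hm : xv (θ ^ (j.1 + 1)) ψ ((1 : Kˣ) : K) ∈ Mj (θ ^ (j.1 + 1)) ψ := xv_mem 1
    replace hm := hbot.le hm
    rw [Submodule.mem_bot] at hm
    exact (xv_linearIndependent h1 hθ hψ).ne_zero (j, 1) hm
  · intro W hW hWs
    by_cases h0 : W = ⊥
    · exact Or.inl h0
    · exact Or.inr (Mj_simple h1 hθ hψ j hW hWs.pStable h0)
  · rintro i j hij ⟨f, hf⟩
    refine Mj_not_iso h1 hθ hψ i j hij f fun a b c e h x y hy => ?_
    rw [pull_eq_actF h] at hy ⊢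
    have hm : actF K (Mg e (-b) (-c) a) (x : Ipts K → F2bar) ∈ Mj (θ ^ (i.1 + 1)) ψ := by
      rw [← hy]; exact y.2
    rw [← hf _ (Mg_mem_Hset (det_inv h)) x hm]
    congr 2
    exact Subtype.ext hy
  · ext x
    rw [mem_iSup_iff h1 hθ hψ, LinearMap.mem_ker, funext_iff]
    refine forall_congr' fun p => ?_
    have : phi K x p = ∑ r, x r * inc F2bar r p := by
      unfold phi AmatF inc
      rw [Matrix.vecMulLinear_apply, Matrix.vecMul, dotProduct]
      refine Finset.sum_congr rfl fun r _ => ?_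
      rw [Matrix.of_apply]
      simp only [onPerp_iff]
    rw [this]; rfl

end ConicPaper
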